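/- arXiv:1905.04785 — 14 statements merged into one kernel-verified Lean document; each statement's English description precedes it below -/
import Mathlib

section
/- Let n ≥ 3 be an integer. Define an equivalence relation ≡_S on the set X_n of bijections x : Fin n → ZMod n by declaring x ≡_S y if and only if there exist k : ZMod n, a sign ε ∈ {1, -1} ⊆ ZMod n, and a Boolean b such that for all i : Fin n, y i = ε * x (ρ_b i) + k, where ρ_b is the identity on Fin n if b is false and the reversal i ↦ n - 1 - i if b is true. Then the number of equivalence classes of X_n under ≡_S equals (1/4) * ((n-1)! + (if n is even then (n/2 + 1) * (n-2)!! else (n-1)!!)). -/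
open Nat

theorem cyc_aux {α : Type*} [Fintype α] [DecidableEq α] (σ : Equiv.Perm α)
    (h2 : ∀ i, σ (σ i) = i) (h1 : ∀ i j, σ i = i → σ j = j → i = j) :
    σ.cycleType = Multiset.replicate (Fintype.card α / 2) 2 := by
  have hp : σ ^ 2 = 1 := by
    ext i; simp [pow_two, h2]
  have hall := Equiv.Perm.pow_prime_eq_one_iff.1 hp
  have hr := Multiset.eq_replicate_card.2 hall
  have hs := σ.sum_cycleType
  rw [hr] at hs
  simp only [Multiset.sum_replicate, smul_eq_mul] at hs
  have hc : σ.supportᶜ.card ≤ 1 := by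
    rw [Finset.card_le_one]
    intro a ha b hb
    simp at ha hb
    exact h1 a b ha hb
  rw [Finset.card_compl] at hc
  have hle := Finset.card_le_univ σ.support
  rw [hr]
  congr 1
  omega

theorem count_aux {α β : Type*} [Fintype α] [DecidableEq α] [Fintype β] [DecidableEq β]
    (hcard : Fintype.card α = Fintype.card β) (σ : Equiv.Perm α) (τ : Equiv.Perm β)
    (h2 : ∀ i, σ (σ i) = i) (h1 : ∀ i j, σ i = i → σ j = j → i = j)
    (t2 : ∀ i, τ (τ i) = i) (t1 : ∀ i j, τ i = i → τ j = j → i = j) :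
    Nat.card {x : {x : α → β // Function.Bijective x} // ∀ i, x.1 (σ i) = τ (x.1 i)} =
      2 ^ (Fintype.card α / 2) * (Fintype.card α / 2)! := by
  obtain ⟨e⟩ := Fintype.card_eq.1 hcard
  have hconj : IsConj (e.permCongr σ) τ := by
    rw [Equiv.Perm.isConj_iff_cycleType_eq, cyc_aux _ t2 t1, cyc_aux]
    · intro i; simp [h2]
    · intro i j hi hj
      simp only [Equiv.permCongr_apply] at hi hj
      have := h1 (e.symm i) (e.symm j) (by rw [Equiv.eq_symm_apply]; exact hi)
        (by rw [Equiv.eq_symm_apply]; exact hj)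
      exact e.symm.injective this
  obtain ⟨c, hc⟩ := isConj_iff.1 hconj
  let y : α ≃ β := e.trans c
  have hy : ∀ i, y (σ i) = τ (y i) := by
    intro i; simp [y, ← hc]
  have hy' : ∀ i, y.symm (τ i) = σ (y.symm i) := by
    intro i; rw [Equiv.symm_apply_eq, hy]; simp
  have E : {x : {x : α → β // Function.Bijective x} // ∀ i, x.1 (σ i) = τ (x.1 i)} ≃
      Subgroup.centralizer ({σ} : Set (Equiv.Perm α)) :=
    { toFun := fun x => ⟨(Equiv.ofBijective x.1.1 x.1.2).trans y.symm, by
        rw [Subgroup.mem_centralizer_singleton_iff]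
        ext i
        simp [x.2, hy']⟩
      invFun := fun p => ⟨⟨fun i => y (p.1 i), y.bijective.comp p.1.bijective⟩, by
        intro i
        have := Subgroup.mem_centralizer_singleton_iff.1 p.2
        have := congrArg (fun q : Equiv.Perm α => q i) this
        simp at this
        simp [← hy, this]⟩
      left_inv := by intro x; ext i; simp
      right_inv := by intro x; ext i; simp }
  rw [Nat.card_congr E, Equiv.Perm.nat_card_centralizer, cyc_aux σ h2 h1]
  have hf : (Fintype.card α - Fintype.card α / 2 * 2)! = 1 := by
    have : Fintype.card α - Fintype.card α / 2 * 2 = 0 ∨ Fintype.card α - Fintype.card α / 2 * 2 = 1 := by omega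
    rcases this with h | h <;> simp [h]
  simp only [Multiset.sum_replicate, Multiset.prod_replicate, smul_eq_mul, hf]
  rcases Nat.eq_zero_or_pos (Fintype.card α / 2) with h | h
  · simp [h]
  · rw [Multiset.toFinset_replicate]
    simp [h.ne']

abbrev PathX (n : ℕ) := {x : Fin n → ZMod n // Function.Bijective x}

def dact {n : ℕ} : DihedralGroup n → ZMod n → ZMod n
  | .r k, a => a + k
  | .sr k, a => -a - k

theorem dact_one {n : ℕ} (a : ZMod n) : dact 1 a = a := by
  rw [DihedralGroup.one_def]; simp [dact]

theorem dact_mul {n : ℕ} (g h : DihedralGroup n) (a : ZMod n) :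
    dact (g * h) a = dact g (dact h a) := by
  rcases g with i | i <;> rcases h with j | j <;> simp [dact] <;> ring

theorem dact_bij {n : ℕ} (g : DihedralGroup n) : Function.Bijective (dact g) := by
  refine Function.bijective_iff_has_inverse.2 ⟨dact g⁻¹, fun a => ?_, fun a => ?_⟩
  · rw [← dact_mul]; simp [dact_one]
  · rw [← dact_mul]; simp [dact_one]

def rho {n : ℕ} (u : ℤˣ) (i : Fin n) : Fin n := if u = 1 then i else i.rev

theorem rho_mul {n : ℕ} (u v : ℤˣ) (i : Fin n) : rho (u * v) i = rho v (rho u i) := by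
  rcases Int.units_eq_one_or u with rfl | rfl <;>
  rcases Int.units_eq_one_or v with rfl | rfl <;> simp [rho]

theorem rho_bij {n : ℕ} (u : ℤˣ) : Function.Bijective (rho u : Fin n → Fin n) := by
  apply Function.Involutive.bijective
  intro i
  rw [← rho_mul]; simp [rho]

instance pathAction (n : ℕ) : MulAction (DihedralGroup n × ℤˣ) (PathX n) where
  smul g x := ⟨fun i => dact g.1 (x.1 (rho g.2 i)),
    (dact_bij g.1).comp (x.2.comp (rho_bij g.2))⟩
  one_smul x := by
    apply Subtype.ext; funext i
    change dact 1 (x.1 (rho 1 i)) = _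
    rw [dact_one]; simp [rho]
  mul_smul g h x := by
    apply Subtype.ext; funext i
    change dact (g.1 * h.1) (x.1 (rho (g.2 * h.2) i)) = dact g.1 (dact h.1 (x.1 (rho h.2 (rho g.2 i))))
    rw [dact_mul, rho_mul]

theorem path_smul {n : ℕ} (g : DihedralGroup n × ℤˣ) (x : PathX n) (i : Fin n) :
    (g • x).1 i = dact g.1 (x.1 (rho g.2 i)) := rfl

theorem mem_fix {n : ℕ} (g : DihedralGroup n × ℤˣ) (x : PathX n) :
    x ∈ MulAction.fixedBy (PathX n) g ↔ ∀ i, dact g.1 (x.1 (rho g.2 i)) = x.1 i := by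
  rw [MulAction.mem_fixedBy, Subtype.ext_iff, funext_iff]
  rfl

def dihSum (n : ℕ) : ZMod n ⊕ ZMod n ≃ DihedralGroup n where
  toFun := Sum.elim .r .sr
  invFun
    | .r k => Sum.inl k
    | .sr k => Sum.inr k
  left_inv := by rintro (k | k) <;> rfl
  right_inv := by rintro (k | k) <;> rfl

theorem sum_dih (n : ℕ) [NeZero n] (f : DihedralGroup n × ℤˣ → ℕ) :
    ∑ g, f g = ∑ k : ZMod n, f (.r k, 1) + ∑ k : ZMod n, f (.sr k, 1)
      + ∑ k : ZMod n, f (.r k, -1) + ∑ k : ZMod n, f (.sr k, -1) := by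
  rw [Fintype.sum_prod_type_right]
  have h : ∀ F : ℤˣ → ℕ, ∑ u, F u = F 1 + F (-1) := by
    intro F
    rw [show (Finset.univ : Finset ℤˣ) = {1, -1} from rfl]
    exact Finset.sum_pair (by decide)
  have h2 : ∀ F : DihedralGroup n → ℕ, ∑ g, F g = ∑ k, F (.r k) + ∑ k, F (.sr k) := by
    intro F
    rw [← (dihSum n).sum_comp, Fintype.sum_sum_type]
    rfl
  rw [h, h2, h2]; ring

theorem burnside_path (n : ℕ) [NeZero n] :
    ∑ g : DihedralGroup n × ℤˣ, Nat.card (MulAction.fixedBy (PathX n) g) =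
      Nat.card (Quot (fun x y : PathX n =>
        ∃ (k ε : ZMod n) (b : Bool), (ε = 1 ∨ ε = -1) ∧
          ∀ i : Fin n, y.1 i = ε * x.1 (if b then i.rev else i) + k)) * (4 * n) := by
  classical
  have : Fintype (PathX n) := Fintype.ofFinite _
  have hB := MulAction.sum_card_fixedBy_eq_card_orbits_mul_card_group
    (DihedralGroup n × ℤˣ) (PathX n)
  simp only [Fintype.card_prod, DihedralGroup.card, Fintype.card_units_int] at hB
  simp only [Nat.card_eq_fintype_card, hB]
  rw [← Nat.card_eq_fintype_card]
  have : Nat.card (Quotient (MulAction.orbitRel (DihedralGroup n × ℤˣ) (PathX n))) =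
    Nat.card (Quot (fun x y : PathX n =>
        ∃ (k ε : ZMod n) (b : Bool), (ε = 1 ∨ ε = -1) ∧
          ∀ i : Fin n, y.1 i = ε * x.1 (if b then i.rev else i) + k)) := by
    apply Nat.card_congr
    apply Quot.congrRight
    intro x y
    rw [Setoid.comm', MulAction.orbitRel_apply, MulAction.mem_orbit_iff]
    constructor
    · rintro ⟨⟨g, u⟩, rfl⟩
      have hu : ∃ b : Bool, ∀ i : Fin n, rho u i = if b then i.rev else i := by
        rcases Int.units_eq_one_or u with rfl | rfl
        · exact ⟨false, by simp [rho]⟩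
        · exact ⟨true, by simp [rho]⟩
      obtain ⟨b, hb⟩ := hu
      rcases g with k | k
      · refine ⟨k, 1, b, Or.inl rfl, fun i => ?_⟩
        rw [path_smul, hb]; simp [dact]
      · refine ⟨-k, -1, b, Or.inr rfl, fun i => ?_⟩
        rw [path_smul, hb]; simp [dact]; ring
    · rintro ⟨k, ε, b, hε, h⟩
      have hu : ∃ u : ℤˣ, ∀ i : Fin n, rho u i = if b then i.rev else i := by
        cases b
        · exact ⟨1, by simp [rho]⟩
        · exact ⟨-1, by simp [rho]⟩
      obtain ⟨u, hu⟩ := hu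
      rcases hε with rfl | rfl
      · refine ⟨(.r k, u), Subtype.ext (funext fun i => ?_)⟩
        rw [path_smul, h, hu]; simp [dact]
      · refine ⟨(.sr (-k), u), Subtype.ext (funext fun i => ?_)⟩
        rw [path_smul, h, hu]; simp [dact]
  rw [this]; ring

theorem fix_r_one (n : ℕ) [NeZero n] (k : ZMod n) :
    Nat.card (MulAction.fixedBy (PathX n) ((.r k, 1) : DihedralGroup n × ℤˣ)) =
      if k = 0 then n ! else 0 := by
  split_ifs with hk
  · subst hk
    have : MulAction.fixedBy (PathX n) ((.r 0, 1) : DihedralGroup n × ℤˣ) = Set.univ := by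
      ext x; rw [mem_fix]; simp [dact, rho]
    rw [this, Nat.card_congr (Equiv.Set.univ _)]
    have E : PathX n ≃ (Fin n ≃ ZMod n) :=
      { toFun := fun x => Equiv.ofBijective x.1 x.2
        invFun := fun e => ⟨e, e.bijective⟩
        left_inv := by intro x; rfl
        right_inv := by intro x; ext i; rfl }
    rw [Nat.card_congr E, Nat.card_eq_fintype_card,
      Fintype.card_equiv (Fintype.equivOfCardEq (by simp [ZMod.card])), Fintype.card_fin]
  · rw [Nat.card_eq_zero]; left
    refine ⟨fun ⟨x, hx⟩ => hk ?_⟩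
    rw [mem_fix] at hx
    simpa [dact, rho] using hx ⟨0, NeZero.pos n⟩

theorem fix_sr_one (n : ℕ) [NeZero n] (hn : 3 ≤ n) (k : ZMod n) :
    Nat.card (MulAction.fixedBy (PathX n) ((.sr k, 1) : DihedralGroup n × ℤˣ)) = 0 := by
  rw [Nat.card_eq_zero]; left
  refine ⟨fun ⟨x, hx⟩ => ?_⟩
  rw [mem_fix] at hx
  have key : ∀ a : ZMod n, -a - k = a := by
    intro a
    obtain ⟨i, rfl⟩ := x.2.2 a
    simpa [dact, rho] using hx i
  have h0 := key 0
  have h1 := key 1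
  have h2 : ((2 : ℕ) : ZMod n) = 0 := by
    push_cast; linear_combination h0 - h1
  rw [ZMod.natCast_eq_zero_iff] at h2
  have := Nat.le_of_dvd (by norm_num) h2
  omega

theorem rev_one {n : ℕ} (i j : Fin n) (hi : i.rev = i) (hj : j.rev = j) : i = j := by
  rw [Fin.ext_iff, Fin.val_rev] at *
  omega

theorem fix_neg (n : ℕ) [NeZero n] (g : DihedralGroup n) (t2 : ∀ a, dact g (dact g a) = a)
    (t1 : ∀ a b, dact g a = a → dact g b = b → a = b) :
    Nat.card (MulAction.fixedBy (PathX n) ((g, -1) : DihedralGroup n × ℤˣ)) =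
      2 ^ (n / 2) * (n / 2)! := by
  have h := count_aux (α := Fin n) (β := ZMod n) (by simp [ZMod.card]) Fin.revPerm
    ⟨dact g, dact g, t2, t2⟩ (by simp) (by simpa using rev_one)
    (fun i => t2 i) (fun i j => t1 i j)
  rw [Fintype.card_fin] at h
  rw [← h]
  apply Nat.card_congr
  apply Equiv.subtypeEquivRight
  intro x
  rw [mem_fix]
  simp only [rho, Fin.revPerm_apply, Equiv.coe_fn_mk]
  constructor
  · intro H i
    have := H i
    simp at this
    rw [← this, t2]
  · intro H i
    simp
    rw [H, t2]

theorem two_val (n : ℕ) [NeZero n] (k : ZMod n) (h : k + k = 0) (h0 : k ≠ 0) :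
    2 * k.val = n := by
  have h1 : ((2 * k.val : ℕ) : ZMod n) = 0 := by
    push_cast; rw [ZMod.natCast_zmod_val]; linear_combination h
  rw [ZMod.natCast_eq_zero_iff] at h1
  have h2 := ZMod.val_lt k
  have h3 : 0 < k.val := by
    rw [Nat.pos_iff_ne_zero]; simpa using h0
  obtain ⟨c, hc⟩ := h1
  have hc2 : c < 2 := by
    by_contra hcon
    have := Nat.mul_le_mul_left n (not_lt.1 hcon)
    omega
  interval_cases c <;> omega

theorem fix_r_neg_mem (n : ℕ) [NeZero n] (hn : 3 ≤ n) (k : ZMod n) (x : PathX n)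
    (hx : x ∈ MulAction.fixedBy (PathX n) ((.r k, -1) : DihedralGroup n × ℤˣ)) :
    2 * k.val = n := by
  rw [mem_fix] at hx
  have H : ∀ i, x.1 i.rev + k = x.1 i := by
    intro i; simpa [dact, rho] using hx i
  apply two_val
  · have h1 := H ⟨0, by omega⟩
    have h2 := H (Fin.rev ⟨0, by omega⟩)
    rw [Fin.rev_rev] at h2
    linear_combination h1 + h2
  · rintro rfl
    have h1 := H ⟨0, by omega⟩
    rw [add_zero] at h1
    have := x.2.1 h1
    rw [Fin.ext_iff, Fin.val_rev] at this
    simp at this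
    omega

theorem fix_r_neg_odd (n : ℕ) [NeZero n] (hn : 3 ≤ n) (ho : ¬ Even n) (k : ZMod n) :
    Nat.card (MulAction.fixedBy (PathX n) ((.r k, -1) : DihedralGroup n × ℤˣ)) = 0 := by
  rw [Nat.card_eq_zero]; left
  refine ⟨fun ⟨x, hx⟩ => ho ?_⟩
  rw [← fix_r_neg_mem n hn k x hx]
  exact even_two_mul _

theorem fix_r_neg_even (n m : ℕ) [NeZero n] (hn : 3 ≤ n) (hm : n = 2 * m) (k : ZMod n) :
    Nat.card (MulAction.fixedBy (PathX n) ((.r k, -1) : DihedralGroup n × ℤˣ)) =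
      if k = (m : ZMod n) then 2 ^ (n / 2) * (n / 2)! else 0 := by
  split_ifs with hk
  · have hmm : (m : ZMod n) + m = 0 := by
      rw [← Nat.cast_add, ← two_mul, ← hm, ZMod.natCast_self]
    have hm0 : (m : ZMod n) ≠ 0 := by
      intro h
      rw [ZMod.natCast_eq_zero_iff] at h
      have := Nat.le_of_dvd (by omega) h
      omega
    subst hk
    apply fix_neg
    · intro a; simp only [dact]; linear_combination hmm
    · intro a b ha; simp [dact, hm0] at ha
  · rw [Nat.card_eq_zero]; left
    refine ⟨fun ⟨x, hx⟩ => hk ?_⟩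
    have := fix_r_neg_mem n hn k x hx
    have h2 : k.val = m := by omega
    rw [← h2, ZMod.natCast_zmod_val]

theorem fix_sr_neg_odd (n : ℕ) [NeZero n] (ho : ¬ Even n) (k : ZMod n) :
    Nat.card (MulAction.fixedBy (PathX n) ((.sr k, -1) : DihedralGroup n × ℤˣ)) =
      2 ^ (n / 2) * (n / 2)! := by
  apply fix_neg
  · intro a; simp only [dact]; ring
  · intro a b ha hb
    simp only [dact] at ha hb
    by_contra hab
    apply ho
    rw [← two_val n (a - b) (by linear_combination hb - ha) (sub_ne_zero.2 hab)]
    exact even_two_mul _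

theorem zmod_two_cases (a : ZMod 2) : a = 0 ∨ a = 1 := by
  revert a; decide

theorem zmod_two_add_self (a : ZMod 2) : a + a = 0 := by
  revert a; decide

theorem fix_sr_neg_even (n : ℕ) [NeZero n] (h2 : 2 ∣ n) (k : ZMod n) :
    Nat.card (MulAction.fixedBy (PathX n) ((.sr k, -1) : DihedralGroup n × ℤˣ)) =
      if ZMod.castHom h2 (ZMod 2) k = 1 then 2 ^ (n / 2) * (n / 2)! else 0 := by
  split_ifs with hk
  · apply fix_neg
    · intro a; simp only [dact]; ring
    · intro a b ha
      exfalso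
      simp only [dact] at ha
      have h1 : k = -(a + a) := by linear_combination -ha
      rw [h1, map_neg, map_add, zmod_two_add_self] at hk
      revert hk; decide
  · rw [Nat.card_eq_zero]; left
    refine ⟨fun ⟨x, hx⟩ => ?_⟩
    rw [mem_fix] at hx
    have h0 : ZMod.castHom h2 (ZMod 2) k = 0 := (zmod_two_cases _).resolve_right hk
    have hv : 2 ∣ k.val := by
      rw [← ZMod.natCast_eq_zero_iff, ← h0, ZMod.castHom_apply, ZMod.natCast_val]
    obtain ⟨c, hc⟩ := hv
    have hk2 : k = (c : ZMod n) + c := by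
      rw [← ZMod.natCast_zmod_val k, hc]; push_cast; ring
    obtain ⟨i, hi⟩ := x.2.2 (-(c : ZMod n))
    have h1 := hx i
    simp only [dact, rho, hi, hk2] at h1
    simp at h1
    have h3 : x.1 i.rev = x.1 i := by rw [hi]; linear_combination -h1
    have h4 := x.2.1 h3
    rw [Fin.ext_iff, Fin.val_rev] at h4
    omega

theorem card_odd (n m : ℕ) [NeZero n] (hm : n = 2 * m) (h2 : 2 ∣ n) :
    (Finset.univ.filter (fun k : ZMod n => ZMod.castHom h2 (ZMod 2) k = 1)).card = m := by
  have hz : ∀ a : ZMod 2, a + 1 = 1 ↔ ¬ a = 1 := by decide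
  have h := Finset.card_filter_add_card_filter_not (s := (Finset.univ : Finset (ZMod n)))
    (fun k : ZMod n => ZMod.castHom h2 (ZMod 2) k = 1)
  have he : (Finset.univ.filter (fun k : ZMod n => ¬ ZMod.castHom h2 (ZMod 2) k = 1)).card =
    (Finset.univ.filter (fun k : ZMod n => ZMod.castHom h2 (ZMod 2) k = 1)).card := by
    apply Finset.card_equiv (Equiv.addRight 1)
    intro k
    simp only [Finset.mem_filter, Finset.mem_univ, true_and, Equiv.coe_addRight, map_add, map_one, hz]
  rw [he, Finset.card_univ, ZMod.card] at h
  omega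

/-- Theorem 1 (paths up to rotation and reflection): the number of equivalence
classes of bijections `x : Fin n → ZMod n` (strings encoding Hamiltonian-path
subgraphs of `K_n`) under the relation identifying `x` and `y` when
`y i = ε * x (ρ_b i) + k` for some rotation `k`, sign `ε = ±1`, and optional
reversal `ρ_b`, equals `(1/4) * ((n-1)! + (if n even then (n/2+1)(n-2)!! else (n-1)!!))`. -/
theorem paths_similarity_classes (n : ℕ) (hn : 3 ≤ n) :
    (Nat.card (Quot (fun x y : {x : Fin n → ZMod n // Function.Bijective x} =>
        ∃ (k ε : ZMod n) (b : Bool), (ε = 1 ∨ ε = -1) ∧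
          ∀ i : Fin n, y.1 i = ε * x.1 (if b then i.rev else i) + k)) : ℚ) =
      (1 / 4) * (((n - 1)! : ℚ) +
        if Even n then ((n / 2 + 1) * Nat.doubleFactorial (n - 2) : ℕ)
        else (Nat.doubleFactorial (n - 1) : ℕ)) := by
  have : NeZero n := ⟨by omega⟩
  have hB := burnside_path n
  rw [sum_dih] at hB
  simp only [fix_r_one, fix_sr_one n hn] at hB
  set N := Nat.card (Quot (fun x y : {x : Fin n → ZMod n // Function.Bijective x} =>
        ∃ (k ε : ZMod n) (b : Bool), (ε = 1 ∨ ε = -1) ∧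
          ∀ i : Fin n, y.1 i = ε * x.1 (if b then i.rev else i) + k)) with hN
  have hfac : n ! = n * (n - 1)! := (Nat.mul_factorial_pred (by omega)).symm
  have key : 4 * N = (n - 1)! + (if Even n then ((n / 2 + 1) * Nat.doubleFactorial (n - 2))
        else (Nat.doubleFactorial (n - 1))) := by
    apply Nat.eq_of_mul_eq_mul_left (show 0 < n by omega)
    by_cases he : Even n
    · obtain ⟨m, hm⟩ := he.two_dvd
      simp only [fix_r_neg_even n m hn hm, fix_sr_neg_even n he.two_dvd] at hB
      rw [← Finset.sum_filter (fun k : ZMod n => ZMod.castHom he.two_dvd (ZMod 2) k = 1),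
        Finset.sum_const (s := Finset.univ.filter (fun k : ZMod n => ZMod.castHom he.two_dvd (ZMod 2) k = 1)),
        card_odd n m hm] at hB
      have hm2 : n / 2 = m := by omega
      have hd : 2 ^ m * m ! = n * Nat.doubleFactorial (n - 2) := by
        rw [← Nat.doubleFactorial_two_mul, ← hm]
        obtain ⟨j, rfl⟩ : ∃ j, n = j + 2 := ⟨n - 2, by omega⟩
        rw [Nat.doubleFactorial_add_two]; rfl
      simp [hm2, hd] at hB
      rw [if_pos he, hm2]
      rw [hfac] at hB
      linarith
    · simp only [fix_r_neg_odd n hn he, fix_sr_neg_odd n he] at hB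
      have hd : 2 ^ (n / 2) * (n / 2) ! = Nat.doubleFactorial (n - 1) := by
        rw [← Nat.doubleFactorial_two_mul]
        congr 1
        rw [Nat.even_iff] at he; omega
      rw [hd] at hB
      simp [ZMod.card] at hB
      rw [if_neg he]
      rw [hfac] at hB
      linarith
  have keyQ := congrArg (Nat.cast : ℕ → ℚ) key
  rw [Nat.cast_mul, Nat.cast_add] at keyQ
  rw [← keyQ]; push_cast; ring
end

section
/- Let n ≥ 3 be an integer. Define an equivalence relation ≡_E on the set X_n of bijections x : Fin n → ZMod n by declaring x ≡_E y if and only if there exist k : ZMod n and a Boolean b such that for all i : Fin n, y i = x (ρ_b i) + k, where ρ_b is the identity on Fin n if b is false and the reversal i ↦ n - 1 - i if b is true. Then the number of equivalence classes of X_n under ≡_E equals (1/2) * ((n-1)! + (if n is even then (n-2)!! else 0)). -/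
open Nat

lemma aux_cycleType {α : Type*} [Fintype α] [DecidableEq α] (m : ℕ) (hm : 1 ≤ m)
    (hc : Fintype.card α = 2 * m) (σ : Equiv.Perm α) (h2 : ∀ i, σ (σ i) = i)
    (hf : ∀ i, σ i ≠ i) : σ.cycleType = Multiset.replicate m 2 := by
  have hsup : σ.support = Finset.univ := by
    ext i; simp [hf i]
  have ho : orderOf σ = 2 := by
    have : Fact (Nat.Prime 2) := ⟨Nat.prime_two⟩
    refine orderOf_eq_prime ?_ ?_
    · ext i; simp [pow_two, h2]
    · rintro rfl
      have : Nonempty α := Fintype.card_pos_iff.1 (by omega)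
      exact hf this.some rfl
  obtain ⟨r, hr⟩ := Equiv.Perm.cycleType_prime_order (σ := σ) (by rw [ho]; exact Nat.prime_two)
  have hs := σ.sum_cycleType
  rw [hsup, Finset.card_univ, hc, hr, ho] at hs
  simp at hs
  rw [hr, ho]
  congr 1
  omega

lemma aux_centralizer {α : Type*} [Fintype α] [DecidableEq α] (m : ℕ) (hm : 1 ≤ m)
    (hc : Fintype.card α = 2 * m) (σ : Equiv.Perm α) (h2 : ∀ i, σ (σ i) = i)
    (hf : ∀ i, σ i ≠ i) :
    Nat.card (Subgroup.centralizer {σ}) = Nat.doubleFactorial (2 * m) := by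
  rw [Equiv.Perm.nat_card_centralizer, aux_cycleType m hm hc σ h2 hf, Nat.doubleFactorial_two_mul,
    hc, Multiset.toFinset_replicate, if_neg (by omega)]
  simp [Nat.mul_comm]

lemma aux_count {α β : Type*} [Fintype α] [DecidableEq α] [Fintype β] (m : ℕ)
    (hm : 1 ≤ m) (hc : Fintype.card α = 2 * m) (hc' : Fintype.card β = 2 * m)
    (σ : Equiv.Perm α) (h2 : ∀ i, σ (σ i) = i) (hf : ∀ i, σ i ≠ i)
    (τ : Equiv.Perm β) (h2' : ∀ i, τ (τ i) = i) (hf' : ∀ i, τ i ≠ i) :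
    Nat.card {x : α ≃ β // ∀ i, x (σ i) = τ (x i)} = Nat.doubleFactorial (2 * m) := by
  rw [← aux_centralizer m hm hc σ h2 hf]
  let e : α ≃ β := Fintype.equivOfCardEq (hc.trans hc'.symm)
  have hconj : IsConj σ ((e.trans τ).trans e.symm) := by
    rw [Equiv.Perm.isConj_iff_cycleType_eq, aux_cycleType m hm hc σ h2 hf,
      aux_cycleType m hm hc]
    · intro i; simp [h2']
    · intro i h
      apply hf' (e i)
      simpa [Equiv.symm_apply_eq] using h
  obtain ⟨c, hcc⟩ := isConj_iff.1 hconj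
  have key : ∀ i, e (c (σ i)) = τ (e (c i)) := by
    intro i
    have := congrArg (fun f : Equiv.Perm α => e (f (c i))) hcc
    simpa using this
  refine Nat.card_congr
    { toFun := fun x => ⟨(x.1.trans e.symm).trans c.symm, ?_⟩
      invFun := fun g => ⟨(g.1.trans c).trans e, ?_⟩
      left_inv := ?_
      right_inv := ?_ }
  · rw [Subgroup.mem_centralizer_singleton_iff]
    ext i
    apply c.injective
    apply e.injective
    simp [key, x.2]
  · intro i
    have := Subgroup.mem_centralizer_singleton_iff.1 g.2
    have h := congrArg (fun f : Equiv.Perm α => f i) this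
    simp only [Equiv.Perm.mul_apply] at h
    simp only [Equiv.trans_apply]
    rw [← key]
    rw [h]
  · intro x
    ext i; simp
  · intro g
    ext i; simp

/-- the reversal permutation attached to a sign -/
def rhoAux (n : ℕ) (e : ℤˣ) : Equiv.Perm (Fin n) := if e = 1 then 1 else Fin.revPerm

lemma rhoAux_mul (n : ℕ) (e f : ℤˣ) (i : Fin n) :
    rhoAux n (e * f) i = rhoAux n f (rhoAux n e i) := by
  rcases Int.units_eq_one_or e with rfl | rfl <;> rcases Int.units_eq_one_or f with rfl | rfl <;>
    simp [rhoAux]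

/-- rotations and reversal acting on strings -/
@[reducible] def actAux (n : ℕ) : MulAction (Multiplicative (ZMod n) × ℤˣ) (Fin n ≃ ZMod n) where
  smul g x := ((rhoAux n g.2).trans x).trans (Equiv.addRight g.1.toAdd)
  one_smul x := by
    ext i
    change x (rhoAux n 1 i) + 0 = x i
    simp [rhoAux]
  mul_smul g h x := by
    ext i
    change x (rhoAux n (g.2 * h.2) i) + (g.1.toAdd + h.1.toAdd) =
      x (rhoAux n h.2 (rhoAux n g.2 i)) + h.1.toAdd + g.1.toAdd
    rw [rhoAux_mul]
    ring

lemma fix_rot (n : ℕ) (hn : 3 ≤ n) (k : ZMod n) :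
    Nat.card {x : Fin n ≃ ZMod n // ∀ i, x i + k = x i} = if k = 0 then n ! else 0 := by
  have : NeZero n := ⟨by omega⟩
  split_ifs with h
  · subst h
    have e : Fin n ≃ ZMod n := Fintype.equivOfCardEq (by simp [ZMod.card])
    rw [Nat.card_congr (Equiv.subtypeUnivEquiv (by simp)), Nat.card_eq_fintype_card,
      Fintype.card_equiv e]
    simp
  · have : IsEmpty {x : Fin n ≃ ZMod n // ∀ i, x i + k = x i} := by
      refine ⟨fun x => h ?_⟩
      simpa using x.2 0
    exact Nat.card_of_isEmpty

lemma fix_rev (n : ℕ) (hn : 3 ≤ n) (k : ZMod n) :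
    Nat.card {x : Fin n ≃ ZMod n // ∀ i, x i.rev + k = x i} =
      if k = ((n / 2 : ℕ) : ZMod n) then (if Even n then Nat.doubleFactorial n else 0) else 0 := by
  have : NeZero n := ⟨by omega⟩
  have step : ∀ x : Fin n ≃ ZMod n, (∀ i, x i.rev + k = x i) →
      k = ((n / 2 : ℕ) : ZMod n) ∧ Even n := by
    intro x hx
    have h0 : k ≠ 0 := by
      rintro rfl
      have := hx 0
      rw [add_zero] at this
      have := congrArg Fin.val (x.injective this)
      simp [Fin.val_rev] at this
      omega
    have h2 : k + k = 0 := by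
      have h1 := hx 0
      have h3 := hx (Fin.rev 0)
      rw [Fin.rev_rev] at h3
      rw [← h3, add_assoc] at h1
      simpa using h1
    have hv : 0 < k.val := by
      rw [Nat.pos_iff_ne_zero]; simpa using h0
    have hlt := k.val_lt
    have hd : n ∣ k.val + k.val := by
      rw [← ZMod.natCast_eq_zero_iff]
      simpa using h2
    obtain ⟨c, hcc⟩ := hd
    have hc1 : c = 1 := by
      have : c < 2 := by
        by_contra hge
        have : n * 2 ≤ n * c := Nat.mul_le_mul_left n (by omega)
        omega
      have : c ≠ 0 := by rintro rfl; omega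
      omega
    subst hc1
    refine ⟨?_, ⟨k.val, by omega⟩⟩
    have : n / 2 = k.val := by omega
    rw [this]; simp
  by_cases hk : k = ((n / 2 : ℕ) : ZMod n) ∧ Even n
  · rw [if_pos hk.1, if_pos hk.2]
    obtain ⟨hk, m, hm⟩ := hk
    have hkm : k = (m : ZMod n) := by rw [hk]; congr 1; omega
    have hkk : k + k = 0 := by
      rw [hkm, ← Nat.cast_add, ← hm]; simp
    have hk0 : k ≠ 0 := by
      rw [hkm, Ne, ZMod.natCast_eq_zero_iff]
      intro h
      have := Nat.le_of_dvd (by omega) h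
      omega
    have := aux_count (α := Fin n) (β := ZMod n) m (by omega) (by simp; omega)
      (by rw [ZMod.card]; omega) Fin.revPerm (by simp)
      (by
        intro i h
        have := congrArg Fin.val h
        simp [Fin.val_rev] at this
        omega)
      (Equiv.addRight k) (by intro i; simp [add_assoc, hkk]) (by intro i; simpa using hk0)
    rw [show Nat.doubleFactorial n = Nat.doubleFactorial (2 * m) by congr 1; omega, ← this]
    refine Nat.card_congr (Equiv.subtypeEquivRight fun x => forall_congr' fun i => ?_)
    simp only [Fin.revPerm_apply, Equiv.coe_addRight]
    constructor
    · intro h; rw [← h, add_assoc, hkk, add_zero]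
    · intro h; rw [h, add_assoc, hkk, add_zero]
  · have : IsEmpty {x : Fin n ≃ ZMod n // ∀ i, x i.rev + k = x i} :=
      ⟨fun x => hk (step x.1 x.2)⟩
    rw [Nat.card_of_isEmpty]
    split_ifs with h1 h2
    · exact absurd ⟨h1, h2⟩ hk
    · rfl
    · rfl

lemma burnside_aux (n : ℕ) (hn : 3 ≤ n) :
    n ! + (if Even n then Nat.doubleFactorial n else 0) =
      Nat.card (Quot (fun x y : {x : Fin n → ZMod n // Function.Bijective x} =>
        ∃ (k : ZMod n) (b : Bool),
          ∀ i : Fin n, y.1 i = x.1 (if b then i.rev else i) + k)) * (n * 2) := by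
  classical
  have : NeZero n := ⟨by omega⟩
  let := actAux n
  have hB := MulAction.sum_card_fixedBy_eq_card_orbits_mul_card_group
    (Multiplicative (ZMod n) × ℤˣ) (Fin n ≃ ZMod n)
  have hq : Nat.card (Quot (fun x y : {x : Fin n → ZMod n // Function.Bijective x} =>
        ∃ (k : ZMod n) (b : Bool),
          ∀ i : Fin n, y.1 i = x.1 (if b then i.rev else i) + k)) =
      Nat.card (Quotient (MulAction.orbitRel (Multiplicative (ZMod n) × ℤˣ) (Fin n ≃ ZMod n))) := by
    let E : {x : Fin n → ZMod n // Function.Bijective x} ≃ (Fin n ≃ ZMod n) :=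
      { toFun := fun x => Equiv.ofBijective x.1 x.2
        invFun := fun e => ⟨e, e.bijective⟩
        left_inv := fun x => by ext i; rfl
        right_inv := fun x => by ext i; rfl }
    refine Nat.card_congr (Quot.congr E fun x y => ?_)
    change _ ↔ MulAction.orbitRel (Multiplicative (ZMod n) × ℤˣ) (Fin n ≃ ZMod n) (E x) (E y)
    rw [Setoid.comm', MulAction.orbitRel_apply, MulAction.mem_orbit_iff]
    constructor
    · rintro ⟨k, b, h⟩
      refine ⟨(Multiplicative.ofAdd k, if b then -1 else 1), ?_⟩
      ext i
      change x.1 (rhoAux n (if b then -1 else 1) i) + k = y.1 i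
      rw [h i]
      cases b <;> simp [rhoAux]
    · rintro ⟨⟨k, e⟩, h⟩
      refine ⟨k.toAdd, decide (e ≠ 1), fun i => ?_⟩
      have h' : x.1 (rhoAux n e i) + k.toAdd = y.1 i := congrArg (fun f : Fin n ≃ ZMod n => f i) h
      rw [← h']
      by_cases he : e = 1 <;> simp [rhoAux, he]
  rw [hq, Nat.card_eq_fintype_card]
  have hG : Fintype.card (Multiplicative (ZMod n) × ℤˣ) = n * 2 := by
    rw [Fintype.card_prod, Fintype.card_multiplicative, ZMod.card]; rfl
  rw [hG] at hB
  rw [← hB, Fintype.sum_prod_type, UnitsInt.univ]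
  have h1 : ∀ k : Multiplicative (ZMod n), Fintype.card
      (MulAction.fixedBy (Fin n ≃ ZMod n) ((k, 1) : Multiplicative (ZMod n) × ℤˣ)) =
      if k.toAdd = 0 then n ! else 0 := by
    intro k
    rw [← fix_rot n hn, ← Nat.card_eq_fintype_card]
    refine Nat.card_congr (Equiv.subtypeEquivRight fun x => ?_)
    rw [MulAction.mem_fixedBy, Equiv.ext_iff]
    refine forall_congr' fun i => ?_
    change x (rhoAux n 1 i) + k.toAdd = x i ↔ _
    simp [rhoAux]
  have h2 : ∀ k : Multiplicative (ZMod n), Fintype.card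
      (MulAction.fixedBy (Fin n ≃ ZMod n) ((k, -1) : Multiplicative (ZMod n) × ℤˣ)) =
      if k.toAdd = ((n / 2 : ℕ) : ZMod n) then
        (if Even n then Nat.doubleFactorial n else 0) else 0 := by
    intro k
    rw [← fix_rev n hn, ← Nat.card_eq_fintype_card]
    refine Nat.card_congr (Equiv.subtypeEquivRight fun x => ?_)
    rw [MulAction.mem_fixedBy, Equiv.ext_iff]
    refine forall_congr' fun i => ?_
    change x (rhoAux n (-1) i) + k.toAdd = x i ↔ _
    simp [rhoAux]
  have hne : (1 : ℤˣ) ≠ -1 := by decide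
  simp only [Finset.sum_pair hne, h1, h2, Finset.sum_add_distrib]
  congr 1
  · rw [Equiv.sum_comp Multiplicative.toAdd (fun k : ZMod n => if k = 0 then n ! else 0)]
    exact (Fintype.sum_ite_eq' (0 : ZMod n) (fun _ => n !)).symm
  · rw [Equiv.sum_comp Multiplicative.toAdd (fun k : ZMod n => if k = ((n / 2 : ℕ) : ZMod n) then
        (if Even n then Nat.doubleFactorial n else 0) else 0)]
    exact (Fintype.sum_ite_eq' ((n / 2 : ℕ) : ZMod n)
      (fun _ => if Even n then Nat.doubleFactorial n else 0)).symm

/-- Theorem 2 (paths up to rotation only): the number of equivalence classes of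
bijections `x : Fin n → ZMod n` under the relation identifying `x` and `y` when
`y i = x (ρ_b i) + k` for some rotation `k` and optional reversal `ρ_b`, equals
`(1/2) * ((n-1)! + (if n even then (n-2)!! else 0))`. -/
theorem paths_equivalence_classes (n : ℕ) (hn : 3 ≤ n) :
    (Nat.card (Quot (fun x y : {x : Fin n → ZMod n // Function.Bijective x} =>
        ∃ (k : ZMod n) (b : Bool),
          ∀ i : Fin n, y.1 i = x.1 (if b then i.rev else i) + k)) : ℚ) =
      (1 / 2) * (((n - 1)! : ℚ) +
        if Even n then (Nat.doubleFactorial (n - 2) : ℕ) else 0) := by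
  have h := burnside_aux n hn
  generalize Nat.card (Quot (fun x y : {x : Fin n → ZMod n // Function.Bijective x} =>
        ∃ (k : ZMod n) (b : Bool),
          ∀ i : Fin n, y.1 i = x.1 (if b then i.rev else i) + k)) = c at h ⊢
  obtain ⟨m, rfl⟩ : ∃ m, n = m + 2 := ⟨n - 2, by omega⟩
  have e1 : m + 2 - 1 = m + 1 := by omega
  have e2 : m + 2 - 2 = m := by omega
  rw [e1, e2]
  rw [Nat.doubleFactorial_add_two, Nat.factorial_succ (m + 1)] at h
  have h' : (m + 2) * ((m + 1)! + if Even (m + 2) then Nat.doubleFactorial m else 0)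
      = (m + 2) * (c * 2) := by
    split_ifs at h ⊢ <;> nlinarith
  have h3 := Nat.eq_of_mul_eq_mul_left (by omega) h'
  have h4 : (((m + 1)! + if Even (m + 2) then Nat.doubleFactorial m else 0 : ℕ) : ℚ)
      = c * 2 := by exact_mod_cast h3
  push_cast at h4
  split_ifs at h4 ⊢ <;> linarith
end

section
/- Let n ≥ 3 be an integer. Define an equivalence relation ≈_S on the set Y_n of bijections x : ZMod n → ZMod n by declaring x ≈_S y if and only if there exist m, k : ZMod n and signs δ, ε ∈ {1, -1} ⊆ ZMod n such that for all i : ZMod n, y i = ε * x (δ * i + m) + k. Then the number of equivalence classes of Y_n under ≈_S equals (1/(4n²)) * ( Σ_{d ∣ n} φ(n/d)² * (n/d)^d * d! + (if n is even then n!! * n * (n + 6) / 4 else n² * (n-1)!!) ), where φ is Euler's totient function. -/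
open Nat

namespace CycSim
open Equiv Equiv.Perm

/-- The dihedral group acting on `ZMod n`. -/
def rho (n : ℕ) : DihedralGroup n →* Perm (ZMod n) where
  toFun g := match g with
    | .r k => Equiv.addRight k
    | .sr k => (Equiv.neg _).trans (Equiv.addRight (-k))
  map_one' := by
    ext x
    rw [DihedralGroup.one_def]
    simp
  map_mul' a b := by
    rcases a with i | i <;> rcases b with j | j <;> ext x <;> simp <;> ring

lemma rho_r {n : ℕ} (k x : ZMod n) : rho n (.r k) x = x + k := rfl
lemma rho_sr {n : ℕ} (k x : ZMod n) : rho n (.sr k) x = -x + -k := rfl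

/-- The action on strings. -/
@[reducible] def act (n : ℕ) : MulAction (DihedralGroup n × DihedralGroup n) (Perm (ZMod n)) where
  smul g x := rho n g.2 * x * (rho n g.1)⁻¹
  one_smul x := by
    change rho n 1 * x * (rho n 1)⁻¹ = x
    simp
  mul_smul a b x := by
    change rho n (a.2 * b.2) * x * (rho n (a.1 * b.1))⁻¹ =
      rho n a.2 * (rho n b.2 * x * (rho n b.1)⁻¹) * (rho n a.1)⁻¹
    simp [mul_assoc]

/-- number of conjugators -/
noncomputable def F {α : Type*} [DecidableEq α] [Fintype α] (σ τ : Perm α) : ℕ :=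
  Nat.card {x : Perm α // τ * x * σ⁻¹ = x}

lemma F_ne {α : Type*} [DecidableEq α] [Fintype α] {σ τ : Perm α}
    (h : σ.cycleType ≠ τ.cycleType) : F σ τ = 0 := by
  unfold F
  rw [Nat.card_eq_zero]
  left
  constructor
  rintro ⟨x, hx⟩
  apply h
  rw [← isConj_iff_cycleType_eq, isConj_iff]
  refine ⟨x, ?_⟩
  rw [mul_inv_eq_iff_eq_mul] at hx
  rw [mul_inv_eq_iff_eq_mul, hx]

lemma F_eq {α : Type*} [DecidableEq α] [Fintype α] {σ τ : Perm α} {d e : ℕ}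
    (h : σ.cycleType = τ.cycleType) (h' : σ.cycleType = Multiset.replicate d e) :
    F σ τ = (Fintype.card α - d * e)! * e ^ d * d ! := by
  have h1 : F σ τ = Nat.card (Subgroup.centralizer {σ}) := by
    rw [← isConj_iff_cycleType_eq, isConj_iff] at h
    obtain ⟨c, rfl⟩ := h
    unfold F
    refine Nat.card_congr ((Equiv.mulLeft c⁻¹).subtypeEquiv ?_)
    intro x
    rw [Subgroup.mem_centralizer_singleton_iff]
    simp only [Equiv.coe_mulLeft, mul_inv_eq_iff_eq_mul]
    constructor
    · intro h
      rw [mul_assoc, ← h]; group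
    · intro h
      rw [mul_assoc c⁻¹ x] at h
      have h := inv_mul_eq_iff_eq_mul.1 h
      rw [h]; group
  rw [h1, nat_card_centralizer, h']
  rcases Nat.eq_zero_or_pos d with rfl | hd
  · simp
  · rw [Multiset.toFinset_replicate, if_neg hd.ne']
    simp

lemma ct_rep {α : Type*} [DecidableEq α] [Fintype α] {σ : Perm α} {e : ℕ} (he : 2 ≤ e)
    (h : ∀ c ∈ σ.cycleType, c = e) : σ.cycleType = Multiset.replicate (σ.support.card / e) e := by
  have h1 := Multiset.eq_replicate_card.2 h
  have h2 := σ.sum_cycleType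
  rw [h1] at h2
  simp at h2
  rw [h1, ← h2, Nat.mul_div_cancel _ (by omega)]

lemma rho_r_pow {n : ℕ} (k x : ZMod n) (j : ℕ) : (rho n (.r k) ^ j) x = x + j • k := by
  rw [← map_pow, DihedralGroup.r_pow, rho_r]
  simp [mul_comm]

lemma ord_r {n : ℕ} (k : ZMod n) : orderOf (rho n (.r k)) = addOrderOf k := by
  apply Nat.dvd_antisymm
  · rw [orderOf_dvd_iff_pow_eq_one]
    ext x; rw [rho_r_pow, addOrderOf_nsmul_eq_zero]; simp
  · rw [addOrderOf_dvd_iff_nsmul_eq_zero]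
    have := rho_r_pow k 0 (orderOf (rho n (.r k)))
    rw [pow_orderOf_eq_one] at this
    simpa using this.symm

lemma ct_r {n : ℕ} [NeZero n] (k : ZMod n) (hk : k ≠ 0) : (rho n (.r k)).cycleType =
    Multiset.replicate (n / addOrderOf k) (addOrderOf k) := by
  have hs : (rho n (.r k)).support = Finset.univ := by
    ext x; simp [rho_r, hk]
  have h2 : 2 ≤ addOrderOf k := by
    have : addOrderOf k ≠ 1 := by rwa [Ne, AddMonoid.addOrderOf_eq_one_iff]
    have := addOrderOf_pos k
    omega
  have := ct_rep (σ := rho n (.r k)) h2 ?_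
  · rw [this, hs, Finset.card_univ, ZMod.card]
  · intro c hc
    rw [cycleType_def, Multiset.mem_map] at hc
    obtain ⟨f, hf, rfl⟩ := hc
    have hf' : f ∈ (rho n (.r k)).cycleFactorsFinset := hf
    rw [mem_cycleFactorsFinset_iff] at hf'
    obtain ⟨hcyc, hfx⟩ := hf'
    simp only [Function.comp]
    rw [← hcyc.orderOf]
    apply Nat.dvd_antisymm
    · rw [hcyc.orderOf, ← ord_r, ← lcm_cycleType]
      exact Multiset.dvd_lcm (by rw [cycleType_def]; exact Multiset.mem_map_of_mem _ hf)
    · obtain ⟨x, hx, -⟩ := hcyc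
      have hc := cycle_is_cycleOf (mem_support.2 hx) hf
      rw [addOrderOf_dvd_iff_nsmul_eq_zero]
      have h3 := cycleOf_pow_apply_self (rho n (.r k)) x (orderOf f)
      rw [← hc, pow_orderOf_eq_one, rho_r_pow] at h3
      simpa using h3.symm

lemma F_rr {n : ℕ} [NeZero n] (i j : ZMod n) : F (rho n (.r i)) (rho n (.r j)) =
    if addOrderOf i = addOrderOf j then
      (addOrderOf i) ^ (n / addOrderOf i) * (n / addOrderOf i)! else 0 := by
  split_ifs with h
  · by_cases hi : i = 0
    · subst hi
      have hj : j = 0 := by simpa [eq_comm] using h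
      subst hj
      have h0 : rho n (.r 0) = 1 := by rw [← DihedralGroup.one_def, map_one]
      rw [F_eq (d := 0) (e := 1) rfl (by rw [h0]; simp)]
      simp
    · have hj : j ≠ 0 := by
        rintro rfl; apply hi; simpa using h
      rw [F_eq (by rw [ct_r _ hi, ct_r _ hj, h]) (ct_r _ hi)]
      have : addOrderOf i ∣ n := by
        have := addOrderOf_dvd_card (x := i)
        rwa [ZMod.card] at this
      rw [ZMod.card, Nat.div_mul_cancel this]
      simp
  · apply F_ne
    intro h'
    apply h
    rw [← ord_r, ← ord_r, ← lcm_cycleType, h', lcm_cycleType]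

lemma sum_rr (n : ℕ) [NeZero n] : ∑ i : ZMod n, ∑ j : ZMod n, F (rho n (.r i)) (rho n (.r j)) =
    ∑ d ∈ n.divisors, (Nat.totient (n / d)) ^ 2 * (n / d) ^ d * d ! := by
  have hord : ∀ i : ZMod n, addOrderOf i ∈ n.divisors := by
    intro i
    have := addOrderOf_dvd_card (x := i)
    rw [ZMod.card] at this
    exact Nat.mem_divisors.2 ⟨this, NeZero.ne n⟩
  have hc : ∀ e ∈ n.divisors, (Finset.univ.filter fun i : ZMod n => addOrderOf i = e).card = φ e := by
    intro e he
    apply IsAddCyclic.card_addOrderOf_eq_totient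
    rw [ZMod.card]; exact Nat.dvd_of_mem_divisors he
  simp_rw [F_rr]
  have h1 : ∀ i : ZMod n, (∑ j : ZMod n, if addOrderOf i = addOrderOf j then
      (addOrderOf i) ^ (n / addOrderOf i) * (n / addOrderOf i)! else 0) =
      φ (addOrderOf i) * ((addOrderOf i) ^ (n / addOrderOf i) * (n / addOrderOf i)!) := by
    intro i
    rw [← Finset.sum_filter, Finset.sum_const, smul_eq_mul, ← hc _ (hord i)]
    simp_rw [eq_comm]
  simp_rw [h1]
  rw [← Finset.sum_fiberwise_of_maps_to (g := fun i : ZMod n => addOrderOf i) (t := n.divisors)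
    (fun i _ => hord i)]
  rw [← Nat.sum_div_divisors n fun d => φ (n / d) ^ 2 * (n / d) ^ d * d !]
  apply Finset.sum_congr rfl
  intro e he
  have hd := Nat.dvd_of_mem_divisors he
  rw [Nat.div_div_self hd (NeZero.ne n)]
  rw [Finset.sum_congr rfl (g := fun _ => φ e * (e ^ (n / e) * (n / e)!))]
  · rw [Finset.sum_const, hc e he, smul_eq_mul]; ring
  · intro i hi
    rw [(Finset.mem_filter.1 hi).2]

lemma ct_sr {n : ℕ} [NeZero n] (j : ZMod n) : (rho n (.sr j)).cycleType =
    Multiset.replicate ((n - Fintype.card {x : ZMod n // 2 * x = - j}) / 2) 2 := by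
  rw [ct_rep le_rfl]
  · congr 2
    have h := Finset.card_compl (rho n (.sr j)).support
    have h2 : Fintype.card {x : ZMod n // 2 * x = - j} = (rho n (.sr j)).supportᶜ.card := by
      rw [Fintype.card_subtype]
      congr 1
      ext x
      simp only [Finset.mem_filter, Finset.mem_univ, true_and, Finset.mem_compl, mem_support,
        rho_sr, not_not]
      constructor
      · intro h; linear_combination -h
      · intro h; linear_combination -h
    have h3 := Finset.card_le_univ (rho n (.sr j)).support
    rw [ZMod.card] at h h3
    omega
  · rw [← pow_prime_eq_one_iff]
    rw [← map_pow, pow_two, DihedralGroup.sr_mul_self, map_one]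

lemma ct_sr_odd {n : ℕ} [NeZero n] (hn : Odd n) (j : ZMod n) : (rho n (.sr j)).cycleType =
    Multiset.replicate ((n - 1) / 2) 2 := by
  rw [ct_sr]
  have hu : IsUnit (2 : ZMod n) := by
    have := (ZMod.isUnit_iff_coprime 2 n).2 (by simpa using hn)
    simpa using this
  obtain ⟨u, hu⟩ := hu
  have : Fintype.card {x : ZMod n // 2 * x = - j} = 1 := by
    rw [Fintype.card_eq_one_iff]
    refine ⟨⟨↑u⁻¹ * -j, by rw [← hu]; simp⟩, ?_⟩
    rintro ⟨y, hy⟩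
    rw [Subtype.mk.injEq, ← hy, ← hu]; simp
  rw [this]

lemma two_mul_eq {m : ℕ} (hm : 0 < m) (y : ZMod (2 * m)) : 2 * y = 0 ↔ y = 0 ∨ y = (m : ZMod (2*m)) := by
  have : NeZero (2 * m) := ⟨by omega⟩
  constructor
  · intro h
    have h1 : ((2 * y.val : ℕ) : ZMod (2 * m)) = 0 := by simpa using h
    rw [ZMod.natCast_eq_zero_iff, Nat.mul_dvd_mul_iff_left (by norm_num)] at h1
    obtain ⟨c, hc⟩ := h1
    have hlt := y.val_lt
    rw [hc] at hlt
    have hc2 : c < 2 := by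
      by_contra h
      have : 2 ≤ c := by omega
      nlinarith
    interval_cases c
    · left; simpa using hc
    · right
      rw [← ZMod.natCast_zmod_val y, hc]; simp
  · rintro (rfl | rfl)
    · simp
    · have := ZMod.natCast_self (2 * m)
      push_cast at this
      exact this

lemma ct_sr_even {m : ℕ} [NeZero (2 * m)] (hm : 0 < m) (t : ℕ) :
    (rho (2 * m) (.sr (t : ZMod (2*m)))).cycleType =
    Multiset.replicate (if Even t then m - 1 else m) 2 := by
  rw [ct_sr]
  split_ifs with h
  · obtain ⟨s, rfl⟩ := h
    have : Fintype.card {x : ZMod (2 * m) // 2 * x = - ((s + s : ℕ) : ZMod (2 * m))} = 2 := by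
      rw [Fintype.card_subtype, Finset.card_eq_two]
      refine ⟨-(s : ZMod (2 * m)), -s + m, ?_, ?_⟩
      · intro h
        have h0 : ((m : ℕ) : ZMod (2 * m)) = 0 := by linear_combination -h
        rw [ZMod.natCast_eq_zero_iff] at h0
        have := Nat.le_of_dvd hm h0
        omega
      · ext x
        have := two_mul_eq hm (x + s)
        simp only [Finset.mem_filter, Finset.mem_univ, true_and, Finset.mem_insert,
          Finset.mem_singleton]
        have e1 : 2 * x = - ((s + s : ℕ) : ZMod (2 * m)) ↔ 2 * (x + s) = 0 := by
          push_cast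
          constructor
          · intro h; linear_combination h
          · intro h; linear_combination h
        rw [e1, this]
        constructor
        · rintro (h | h)
          · left; linear_combination h
          · right; linear_combination h
        · rintro (h | h)
          · left; linear_combination h
          · right; linear_combination h
    rw [this]
    congr 1
    omega
  · have : Fintype.card {x : ZMod (2 * m) // 2 * x = - (t : ZMod (2 * m))} = 0 := by
      rw [Fintype.card_eq_zero_iff]
      constructor
      rintro ⟨x, hx⟩
      apply h
      have := congrArg (ZMod.castHom (Dvd.intro m rfl : 2 ∣ 2 * m) (ZMod 2)) hx
      simp only [map_mul, map_neg, map_natCast, map_ofNat] at this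
      have h2 : (2 : ZMod 2) = 0 := rfl
      rw [h2, zero_mul, eq_comm, neg_eq_zero, ZMod.natCast_eq_zero_iff] at this
      exact (even_iff_two_dvd).2 this
    rw [this]
    congr 1
    omega


lemma F_comm {α : Type*} [DecidableEq α] [Fintype α] (σ τ : Perm α) : F σ τ = F τ σ := by
  unfold F
  refine Nat.card_congr ((Equiv.inv (Perm α)).subtypeEquiv ?_)
  intro x
  simp only [Equiv.inv_apply]
  rw [← inv_inj, mul_inv_eq_iff_eq_mul, mul_inv_rev, mul_inv_rev, inv_inv, mul_inv_eq_iff_eq_mul]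
  rw [← mul_assoc, eq_comm, ← mul_inv_eq_iff_eq_mul, eq_comm, inv_inv, mul_inv_eq_iff_eq_mul]

lemma sum_dih {n : ℕ} [NeZero n] (f : DihedralGroup n → ℕ) :
    ∑ g, f g = ∑ i : ZMod n, f (.r i) + ∑ i : ZMod n, f (.sr i) := by
  let e : ZMod n ⊕ ZMod n ≃ DihedralGroup n :=
    { toFun := Sum.elim .r .sr
      invFun := fun g => match g with
        | .r j => Sum.inl j
        | .sr j => Sum.inr j
      left_inv := by rintro (x | x) <;> rfl
      right_inv := by rintro (x | x) <;> rfl }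
  rw [← e.sum_comp, Fintype.sum_sum_type]
  rfl

lemma burnside (n : ℕ) [NeZero n] :
    Nat.card (Quot (fun x y : {x : ZMod n → ZMod n // Function.Bijective x} =>
        ∃ (m k δ ε : ZMod n), (δ = 1 ∨ δ = -1) ∧ (ε = 1 ∨ ε = -1) ∧
          ∀ i : ZMod n, y.1 i = ε * x.1 (δ * i + m) + k)) * (4 * n ^ 2) =
    ∑ g : DihedralGroup n, ∑ h : DihedralGroup n, F (rho n g) (rho n h) := by
  classical
  letI := act n
  have hB := MulAction.sum_card_fixedBy_eq_card_orbits_mul_card_group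
    (DihedralGroup n × DihedralGroup n) (Perm (ZMod n))
  rw [Fintype.sum_prod_type, Fintype.card_prod, DihedralGroup.card] at hB
  have h1 : ∀ g h : DihedralGroup n, Fintype.card (MulAction.fixedBy (Perm (ZMod n)) (g, h)) =
      F (rho n g) (rho n h) := by
    intro g h
    rw [← Nat.card_eq_fintype_card]
    rfl
  simp_rw [h1] at hB
  rw [hB, ← Nat.card_eq_fintype_card]
  have key : Nat.card (Quot (fun x y : {x : ZMod n → ZMod n // Function.Bijective x} =>
        ∃ (m k δ ε : ZMod n), (δ = 1 ∨ δ = -1) ∧ (ε = 1 ∨ ε = -1) ∧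
          ∀ i : ZMod n, y.1 i = ε * x.1 (δ * i + m) + k)) =
      Nat.card (Quotient (MulAction.orbitRel (DihedralGroup n × DihedralGroup n)
        (Perm (ZMod n)))) := by
    let e : {x : ZMod n → ZMod n // Function.Bijective x} ≃ Perm (ZMod n) :=
      { toFun := fun x => Equiv.ofBijective x.1 x.2
        invFun := fun p => ⟨p, p.bijective⟩
        left_inv := fun x => rfl
        right_inv := fun p => by ext; rfl }
    refine Nat.card_congr (Quot.congr e ?_)
    intro x y
    have h2 : (MulAction.orbitRel (DihedralGroup n × DihedralGroup n)
        (Perm (ZMod n))) (e x) (e y) ↔ ∃ g h : DihedralGroup n, ∀ i, y.1 i =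
          rho n h (x.1 (rho n g i)) := by
      rw [Setoid.comm', MulAction.orbitRel_apply, MulAction.mem_orbit_iff]
      constructor
      · rintro ⟨⟨g, h⟩, hg⟩
        refine ⟨g⁻¹, h, fun i => ?_⟩
        have := congrArg (fun p : Perm (ZMod n) => p i) hg
        rw [map_inv]
        exact this.symm
      · rintro ⟨g, h, hg⟩
        refine ⟨(g⁻¹, h), ?_⟩
        ext i
        have h3 : (rho n g⁻¹)⁻¹ = rho n g := by rw [map_inv, inv_inv]
        change (rho n h * e x * (rho n g⁻¹)⁻¹) i = y.1 i
        rw [h3, hg]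
        rfl
    refine Iff.trans ?_ h2.symm
    constructor
    · rintro ⟨m, k, δ, ε, hδ, hε, hxy⟩
      have a1 : ∃ g, ∀ i, rho n g i = δ * i + m := by
        rcases hδ with rfl | rfl
        · exact ⟨.r m, fun i => by rw [rho_r]; ring⟩
        · exact ⟨.sr (-m), fun i => by rw [rho_sr]; ring⟩
      have a2 : ∃ g, ∀ i, rho n g i = ε * i + k := by
        rcases hε with rfl | rfl
        · exact ⟨.r k, fun i => by rw [rho_r]; ring⟩
        · exact ⟨.sr (-k), fun i => by rw [rho_sr]; ring⟩
      obtain ⟨g, hg⟩ := a1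
      obtain ⟨h, hh⟩ := a2
      exact ⟨g, h, fun i => by rw [hxy, hg, hh]⟩
    · rintro ⟨g, h, hxy⟩
      have a : ∀ g : DihedralGroup n, ∃ δ m : ZMod n, (δ = 1 ∨ δ = -1) ∧
          ∀ i, rho n g i = δ * i + m := by
        rintro (m | m)
        · exact ⟨1, m, Or.inl rfl, fun i => by rw [rho_r]; ring⟩
        · exact ⟨-1, -m, Or.inr rfl, fun i => by rw [rho_sr]; ring⟩
      obtain ⟨δ, m, hδ, hg⟩ := a g
      obtain ⟨ε, k, hε, hh⟩ := a h
      exact ⟨m, k, δ, ε, hδ, hε, fun i => by rw [hxy, hg, hh]⟩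
  rw [key]
  ring

lemma total (n : ℕ) [NeZero n] :
    ∑ g : DihedralGroup n, ∑ h : DihedralGroup n, F (rho n g) (rho n h) =
    (∑ d ∈ n.divisors, (Nat.totient (n / d)) ^ 2 * (n / d) ^ d * d !) +
    (2 * ∑ i : ZMod n, ∑ j : ZMod n, F (rho n (.sr i)) (rho n (.r j)) +
      ∑ i : ZMod n, ∑ j : ZMod n, F (rho n (.sr i)) (rho n (.sr j))) := by
  rw [← sum_rr, sum_dih]
  simp_rw [sum_dih]
  rw [Finset.sum_add_distrib, Finset.sum_add_distrib]
  have : ∑ i : ZMod n, ∑ j : ZMod n, F (rho n (.r i)) (rho n (.sr j)) =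
      ∑ i : ZMod n, ∑ j : ZMod n, F (rho n (.sr i)) (rho n (.r j)) := by
    rw [Finset.sum_comm]
    simp_rw [F_comm]
  rw [this]
  ring

lemma rep_inj {a b : ℕ} (h : Multiset.replicate a 2 = Multiset.replicate b 2) : a = b := by
  simpa using congrArg Multiset.card h

lemma odd_case (n : ℕ) (hn : 3 ≤ n) [NeZero n] (ho : Odd n) :
    (2 * ∑ i : ZMod n, ∑ j : ZMod n, F (rho n (.sr i)) (rho n (.r j)) +
      ∑ i : ZMod n, ∑ j : ZMod n, F (rho n (.sr i)) (rho n (.sr j))) =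
    n ^ 2 * (n - 1)‼ := by
  have h1 : ∀ i j : ZMod n, F (rho n (.sr i)) (rho n (.r j)) = 0 := by
    intro i j
    apply F_ne
    intro h
    have h2 := congrArg Multiset.lcm h
    rw [lcm_cycleType, lcm_cycleType, ord_r] at h2
    have h3 : addOrderOf j ∣ n := by
      have := addOrderOf_dvd_card (x := j)
      rwa [ZMod.card] at this
    have h4 : 2 ∣ orderOf (rho n (.sr i)) := by
      rw [← lcm_cycleType]
      apply Multiset.dvd_lcm
      rw [ct_sr_odd ho, Multiset.mem_replicate]
      exact ⟨by omega, rfl⟩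
    rw [h2] at h4
    have := h4.trans h3
    obtain ⟨t, rfl⟩ := ho
    omega
  have h2 : ∀ i j : ZMod n, F (rho n (.sr i)) (rho n (.sr j)) = (n - 1)‼ := by
    intro i j
    rw [F_eq (by rw [ct_sr_odd ho, ct_sr_odd ho]) (ct_sr_odd ho i)]
    obtain ⟨t, rfl⟩ := ho
    have e1 : (2 * t + 1 - 1) / 2 = t := by omega
    have e2 : 2 * t + 1 - t * 2 = 1 := by omega
    rw [ZMod.card, e1, e2, Nat.add_sub_cancel, Nat.doubleFactorial_two_mul]
    simp
  simp_rw [h1, h2]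
  simp [ZMod.card]
  ring

lemma sum_par {m : ℕ} [NeZero (2 * m)] (f : ZMod (2 * m) → ℕ) (A B : ℕ)
    (h : ∀ t : ℕ, f t = if Even t then A else B) : ∑ i, f i = m * (A + B) := by
  have h1 : ∀ i : ZMod (2 * m), f i = if Even i.val then A else B := by
    intro i
    rw [← h, ZMod.natCast_zmod_val]
  simp_rw [h1]
  have h2 : ∑ i : ZMod (2 * m), (if Even i.val then A else B) =
      ∑ t ∈ Finset.range (2 * m), if Even t then A else B := by
    refine Finset.sum_bij (fun i _ => i.val) ?_ ?_ ?_ ?_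
    · intro i _; simpa using i.val_lt
    · intro i _ j _ h; exact ZMod.val_injective _ h
    · intro t ht
      exact ⟨t, Finset.mem_univ _, ZMod.val_cast_of_lt (by simpa using ht)⟩
    · intro i _; rfl
  rw [h2]
  clear h h1 h2
  have : ∀ m : ℕ, (∑ t ∈ Finset.range (2 * m), if Even t then A else B) = m * (A + B) := by
    intro m
    induction m with
    | zero => simp
    | succ m ih =>
      rw [show 2 * (m + 1) = 2 * m + 1 + 1 by ring, Finset.sum_range_succ, Finset.sum_range_succ, ih]
      simp [Nat.even_add_one]
      ring
  exact this m

lemma ct_half {m : ℕ} [NeZero (2 * m)] (hm : 2 ≤ m) (j : ZMod (2 * m)) (a : ℕ) (ha : 0 < a)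
    (h : (rho (2 * m) (.r j)).cycleType = Multiset.replicate a 2) :
    a = m ∧ j = (m : ZMod (2 * m)) := by
  have hj : j ≠ 0 := by
    rintro rfl
    have h0 : rho (2 * m) (.r 0) = 1 := by rw [← DihedralGroup.one_def, map_one]
    rw [h0, cycleType_one] at h
    have := congrArg Multiset.card h
    simp at this
    omega
  have h1 := ct_r j hj
  rw [h] at h1
  have h2 : 2 ∈ Multiset.replicate (2 * m / addOrderOf j) (addOrderOf j) := by
    rw [← h1, Multiset.mem_replicate]; exact ⟨by omega, rfl⟩
  have h3 := (Multiset.mem_replicate.1 h2).2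
  rw [← h3] at h1
  refine ⟨by have := rep_inj h1; omega, ?_⟩
  have h4 := addOrderOf_nsmul_eq_zero j
  rw [← h3] at h4
  have h5 := (two_mul_eq (by omega : 0 < m) j).1 (by simpa using h4)
  tauto

lemma ct_m {m : ℕ} [NeZero (2 * m)] (hm : 2 ≤ m) :
    (rho (2 * m) (.r (m : ZMod (2 * m)))).cycleType = Multiset.replicate m 2 := by
  have h0 : (m : ZMod (2 * m)) ≠ 0 := by
    intro h
    rw [ZMod.natCast_eq_zero_iff] at h
    have := Nat.le_of_dvd (by omega) h
    omega
  have : addOrderOf (m : ZMod (2 * m)) = 2 := by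
    apply addOrderOf_eq_prime
    · have := (two_mul_eq (by omega : 0 < m) (m : ZMod (2 * m))).2 (Or.inr rfl)
      simpa using this
    · exact h0
  rw [ct_r _ h0, this]
  congr 1
  omega

lemma even_case (m : ℕ) (hm : 2 ≤ m) [NeZero (2 * m)] :
    (2 * ∑ i : ZMod (2 * m), ∑ j : ZMod (2 * m), F (rho (2 * m) (.sr i)) (rho (2 * m) (.r j)) +
      ∑ i : ZMod (2 * m), ∑ j : ZMod (2 * m), F (rho (2 * m) (.sr i)) (rho (2 * m) (.sr j))) =
    (2 * m)‼ * m * (m + 3) := by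
  have hm0 : 0 < m := by omega
  have hA : (2 * m - m * 2)! * 2 ^ m * m ! = (2 * m)‼ := by
    rw [show 2 * m - m * 2 = 0 by omega, Nat.doubleFactorial_two_mul]; simp
  have h1 : ∑ i : ZMod (2 * m), ∑ j : ZMod (2 * m), F (rho (2 * m) (.sr i)) (rho (2 * m) (.r j))
      = m * (0 + (2 * m)‼) := by
    apply sum_par
    intro t
    have hct := ct_sr_even hm0 t
    split_ifs with ht
    · rw [if_pos ht] at hct
      apply Finset.sum_eq_zero
      intro j _
      apply F_ne
      intro h
      rw [hct] at h
      have := (ct_half hm j _ (by omega) h.symm).1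
      omega
    · rw [if_neg ht] at hct
      rw [Finset.sum_eq_single (m : ZMod (2 * m))]
      · rw [F_eq (by rw [hct, ct_m hm]) hct, ZMod.card, hA]
      · intro j _ hj
        apply F_ne
        intro h
        rw [hct] at h
        exact hj (ct_half hm j _ (by omega) h.symm).2
      · simp
  have h2 : ∑ i : ZMod (2 * m), ∑ j : ZMod (2 * m), F (rho (2 * m) (.sr i)) (rho (2 * m) (.sr j))
      = m * (m * (2 * 2 ^ (m - 1) * (m - 1)! + 0) + m * (0 + (2 * m)‼)) := by
    apply sum_par
    intro t
    have hct := ct_sr_even hm0 t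
    split_ifs with ht
    · rw [if_pos ht] at hct
      apply sum_par
      intro s
      have hcs := ct_sr_even hm0 s
      split_ifs with hs
      · rw [if_pos hs] at hcs
        rw [F_eq (by rw [hct, hcs]) hct, ZMod.card, show 2 * m - (m - 1) * 2 = 2 by omega]
        simp
      · rw [if_neg hs] at hcs
        apply F_ne
        intro h
        rw [hct, hcs] at h
        have := rep_inj h
        omega
    · rw [if_neg ht] at hct
      apply sum_par
      intro s
      have hcs := ct_sr_even hm0 s
      split_ifs with hs
      · rw [if_pos hs] at hcs
        apply F_ne
        intro h
        rw [hct, hcs] at h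
        have := rep_inj h
        omega
      · rw [if_neg hs] at hcs
        rw [F_eq (by rw [hct, hcs]) hct, ZMod.card, hA]
  rw [h1, h2, Nat.doubleFactorial_two_mul]
  obtain ⟨k, rfl⟩ : ∃ k, m = k + 1 := ⟨m - 1, by omega⟩
  rw [Nat.add_sub_cancel, Nat.factorial_succ]
  ring

end CycSim


/-- Theorem 3 (cycles up to rotation and reflection): the number of equivalence
classes of bijections `x : ZMod n → ZMod n` (cyclic strings encoding
Hamiltonian-cycle subgraphs of `K_n`) under the relation identifying `x` and `y`
when `y i = ε * x (δ * i + m) + k` for some `m, k : ZMod n` and signs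
`δ, ε = ±1`, equals
`(1/(4n²)) * (Σ_{d ∣ n} φ(n/d)² (n/d)^d d! + (if n even then n!!·n(n+6)/4 else n²(n-1)!!))`. -/
theorem cycles_similarity_classes (n : ℕ) (hn : 3 ≤ n) :
    (Nat.card (Quot (fun x y : {x : ZMod n → ZMod n // Function.Bijective x} =>
        ∃ (m k δ ε : ZMod n), (δ = 1 ∨ δ = -1) ∧ (ε = 1 ∨ ε = -1) ∧
          ∀ i : ZMod n, y.1 i = ε * x.1 (δ * i + m) + k)) : ℚ) =
      (1 / (4 * (n : ℚ) ^ 2)) *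
        ((∑ d ∈ n.divisors, (Nat.totient (n / d)) ^ 2 * (n / d) ^ d * d ! : ℕ) +
          if Even n then (Nat.doubleFactorial n * n * (n + 6) : ℚ) / 4
          else (n ^ 2 * Nat.doubleFactorial (n - 1) : ℕ)) := by
  have : NeZero n := ⟨by omega⟩
  have hB := CycSim.burnside n
  rw [CycSim.total] at hB
  have hn0 : (n : ℚ) ≠ 0 := by
    have : n ≠ 0 := by omega
    exact_mod_cast this
  rw [one_div, eq_comm, inv_mul_eq_iff_eq_mul₀ (by positivity), mul_comm (4 * (n : ℚ) ^ 2)]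
  have hB' := congrArg (Nat.cast : ℕ → ℚ) hB
  rw [Nat.cast_mul, Nat.cast_mul, Nat.cast_pow, Nat.cast_ofNat, Nat.cast_add] at hB'
  rw [hB']
  congr 1
  split_ifs with he
  · obtain ⟨m, rfl⟩ := even_iff_exists_two_mul.1 he
    rw [CycSim.even_case m (by omega)]
    push_cast
    ring
  · rw [CycSim.odd_case n hn (Nat.not_even_iff_odd.1 he)]
end

section
/- Let n ≥ 3 be an integer. Define an equivalence relation ≈_E on the set Y_n of bijections x : ZMod n → ZMod n by declaring x ≈_E y if and only if there exist m, k : ZMod n and a sign δ ∈ {1, -1} ⊆ ZMod n such that for all i : ZMod n, y i = x (δ * i + m) + k. Then the number of equivalence classes of Y_n under ≈_E equals (1/(2n²)) * ( Σ_{d ∣ n} φ(n/d)² * (n/d)^d * d! + (if n is even then (n/2) * n!! else 0) ), where φ is Euler's totient function. -/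
open Nat

namespace CycEq

/-- Semiregular permutations: a power with a fixed point is trivial. -/
def Semireg {α : Type*} (τ : Equiv.Perm α) : Prop := ∀ (j : ℕ) (x : α), (τ ^ j) x = x → τ ^ j = 1

theorem Semireg.cycleType {α : Type*} [Fintype α] [DecidableEq α] {τ : Equiv.Perm α}
    (h : Semireg τ) (h1 : τ ≠ 1) :
    τ.cycleType = Multiset.replicate (Fintype.card α / orderOf τ) (orderOf τ) := by
  have key : ∀ b ∈ τ.cycleType, b = orderOf τ := by
    intro b hb
    apply Nat.dvd_antisymm (Equiv.Perm.dvd_of_mem_cycleType hb)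
    obtain ⟨c, s, hcs, hd, hc, hcard⟩ := Equiv.Perm.mem_cycleType_iff.1 hb
    have hc2 := hc
    obtain ⟨x, hx, -⟩ := hc
    have hsx : s x = x := (hd x).resolve_left hx
    apply orderOf_dvd_of_pow_eq_one
    apply h b x
    rw [hcs, hd.commute.mul_pow, Equiv.Perm.mul_apply,
      Equiv.Perm.pow_apply_eq_self_of_apply_eq_self hsx, ← hcard, ← hc2.orderOf,
      pow_orderOf_eq_one]
    rfl
  rw [Multiset.eq_replicate]
  refine ⟨?_, key⟩
  have h2 := Equiv.Perm.sum_cycleType τ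
  have hs : τ.support = Finset.univ := by
    ext x
    simp only [Equiv.Perm.mem_support, Finset.mem_univ, iff_true]
    intro hx
    exact h1 (by simpa using h 1 x (by simpa using hx))
  rw [hs, Finset.card_univ, Multiset.eq_replicate_card.2 key, Multiset.sum_replicate,
    smul_eq_mul] at h2
  rw [← h2, Nat.mul_div_cancel _ (orderOf_pos τ)]

theorem Semireg.dvd {α : Type*} [Fintype α] [DecidableEq α] {τ : Equiv.Perm α}
    (h : Semireg τ) : orderOf τ ∣ Fintype.card α := by
  by_cases h1 : τ = 1
  · simp [h1]
  have h2 := Equiv.Perm.sum_cycleType τ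
  have hs : τ.support = Finset.univ := by
    ext x
    simp only [Equiv.Perm.mem_support, Finset.mem_univ, iff_true]
    intro hx
    exact h1 (by simpa using h 1 x (by simpa using hx))
  rw [hs, Finset.card_univ, h.cycleType h1, Multiset.sum_replicate, smul_eq_mul] at h2
  exact ⟨_, by rw [← h2, mul_comm]⟩

theorem Semireg.card_centralizer {α : Type*} [Fintype α] [Nonempty α] [DecidableEq α]
    {τ : Equiv.Perm α} (h : Semireg τ) :
    Nat.card (Subgroup.centralizer {τ}) =
      (orderOf τ) ^ (Fintype.card α / orderOf τ) * (Fintype.card α / orderOf τ)! := by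
  rw [Equiv.Perm.nat_card_centralizer]
  by_cases h1 : τ = 1
  · simp [h1]
  · have hd := Nat.div_mul_cancel h.dvd
    have hp : Fintype.card α / orderOf τ ≠ 0 := by
      intro h0
      rw [h0] at hd
      have := Fintype.card_pos (α := α)
      omega
    rw [h.cycleType h1, Multiset.sum_replicate, smul_eq_mul, hd, Multiset.prod_replicate,
      Multiset.toFinset_replicate, if_neg hp]
    simp

theorem Semireg.isConj_iff {α : Type*} [Fintype α] [DecidableEq α]
    {τ ρ : Equiv.Perm α} (h : Semireg τ) (h' : Semireg ρ) :
    IsConj τ ρ ↔ orderOf τ = orderOf ρ := by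
  constructor
  · intro hc
    rw [Equiv.Perm.isConj_iff_cycleType_eq] at hc
    rw [← Equiv.Perm.lcm_cycleType, hc, Equiv.Perm.lcm_cycleType]
  · intro ho
    by_cases h1 : τ = 1
    · have : ρ = 1 := by rw [← orderOf_eq_one_iff, ← ho, h1, orderOf_one]
      rw [h1, this]
    · have h2 : ρ ≠ 1 := by
        intro h2
        rw [h2, orderOf_one, orderOf_eq_one_iff] at ho
        exact h1 ho
      rw [Equiv.Perm.isConj_iff_cycleType_eq, h.cycleType h1, h'.cycleType h2, ho]

theorem card_conj {G : Type*} [Group G] (a b : G) [Decidable (IsConj b a)] :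
    Nat.card {s : G // a * s * b⁻¹ = s} =
      if IsConj b a then Nat.card (Subgroup.centralizer {a}) else 0 := by
  split_ifs with h
  · obtain ⟨t, ht⟩ := isConj_iff.1 h
    subst ht
    apply Nat.card_congr
    refine ⟨fun s => ⟨s.1 * t⁻¹, ?_⟩, fun s => ⟨s.1 * t, ?_⟩, fun s => ?_, fun s => ?_⟩
    · rw [Subgroup.mem_centralizer_singleton_iff]
      have := s.2
      rw [mul_inv_eq_iff_eq_mul] at this
      rw [← mul_assoc (t * b * t⁻¹), this]
      group
    · have := s.2
      rw [Subgroup.mem_centralizer_singleton_iff] at this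
      rw [← mul_assoc, ← this]
      group
    · simp
    · simp
  · rw [Nat.card_eq_zero]
    left
    constructor
    rintro ⟨s, hs⟩
    apply h
    rw [isConj_iff]
    refine ⟨s, ?_⟩
    rw [mul_inv_eq_iff_eq_mul] at hs ⊢
    exact hs.symm

variable {n : ℕ}

/-- dihedral action on `ZMod n` -/
def rhoFun : DihedralGroup n → Equiv.Perm (ZMod n)
  | .r i => ⟨fun x => x + i, fun x => x - i, fun x => by simp, fun x => by simp⟩
  | .sr i => ⟨fun x => -x - i, fun x => -x - i, fun x => by simp, fun x => by simp⟩

/-- dihedral action on `ZMod n` -/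
def rho : DihedralGroup n →* Equiv.Perm (ZMod n) where
  toFun := rhoFun
  map_one' := by
    ext x
    simp [DihedralGroup.one_def, rhoFun, -DihedralGroup.r_zero]
  map_mul' := by
    rintro (a | a) (b | b) <;> apply Equiv.ext <;> intro x <;>
      simp [rhoFun] <;> ring

theorem rho_r (i x : ZMod n) : rho (.r i) x = x + i := rfl
theorem rho_sr (i x : ZMod n) : rho (.sr i) x = -x - i := rfl

theorem rho_r_pow (i : ZMod n) (j : ℕ) (x : ZMod n) : (rho (.r i) ^ j) x = x + i * j := by
  rw [← map_pow, DihedralGroup.r_pow, rho_r]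

theorem semireg_r (i : ZMod n) : Semireg (rho (.r i)) := by
  intro j x h
  ext y
  rw [rho_r_pow] at h ⊢
  simp at h
  simp [h]

theorem order_r (i : ZMod n) : orderOf (rho (.r i)) = addOrderOf i := by
  apply Nat.dvd_antisymm
  · apply orderOf_dvd_of_pow_eq_one
    ext y
    rw [rho_r_pow, mul_comm, ← nsmul_eq_mul, addOrderOf_nsmul_eq_zero]
    simp
  · apply addOrderOf_dvd_of_nsmul_eq_zero
    have := rho_r_pow i (orderOf (rho (.r i))) 0
    rw [pow_orderOf_eq_one] at this
    simpa [mul_comm] using this.symm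

theorem sr_sq (i : ZMod n) : rho (.sr i) ^ 2 = 1 := by
  rw [← map_pow, pow_two, DihedralGroup.sr_mul_self, map_one]

theorem sr_ne_one (hn : 3 ≤ n) (i : ZMod n) : rho (.sr i) ≠ 1 := by
  intro h
  have h0 := congrArg (fun f => f 0) h
  have h1 := congrArg (fun f => f 1) h
  simp [rho_sr] at h0 h1
  subst h0
  have : ((2 : ℕ) : ZMod n) = 0 := by
    push_cast
    linear_combination -h1
  rw [ZMod.natCast_eq_zero_iff] at this
  have := Nat.le_of_dvd (by norm_num) this
  omega

theorem order_sr (hn : 3 ≤ n) (i : ZMod n) : orderOf (rho (.sr i)) = 2 :=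
  orderOf_eq_prime (sr_sq i) (sr_ne_one hn i)

theorem semireg_sr (i : ZMod n) (h : ∀ x, -x - i ≠ x) : Semireg (rho (.sr i)) := by
  intro j x hx
  rcases Nat.even_or_odd' j with ⟨k, rfl | rfl⟩
  · rw [pow_mul, sr_sq, one_pow]
  · rw [pow_succ, pow_mul, sr_sq, one_pow, one_mul] at hx
    exact absurd hx (h x)

theorem isConj_sr [NeZero n] (hn : 3 ≤ n) (i k : ZMod n) :
    IsConj (rho (.sr i)) (rho (.r k)) ↔ (∀ x, -x - i ≠ x) ∧ addOrderOf k = 2 := by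
  constructor
  · intro h
    have hf : ∀ x, -x - i ≠ x := by
      intro x hx
      obtain ⟨t, ht⟩ := isConj_iff.1 h
      have h2 : rho (.r k) (t x) = t x := by
        rw [← ht]
        simp [rho_sr, hx]
      have h3 : rho (.r k) = 1 := by
        have := semireg_r k 1 (t x) (by simpa using h2)
        simpa using this
      rw [h3] at h
      exact sr_ne_one hn i (isConj_one_left.1 h)
    refine ⟨hf, ?_⟩
    rw [(semireg_sr i hf).isConj_iff (semireg_r k), order_sr hn, order_r] at h
    exact h.symm
  · rintro ⟨hf, hk⟩
    rw [(semireg_sr i hf).isConj_iff (semireg_r k), order_sr hn, order_r, hk]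

/-- The acting group. -/
abbrev Grp (n : ℕ) := DihedralGroup n × Multiplicative (ZMod n)

/-- The action. -/
@[reducible] def act (n : ℕ) : MulAction (Grp n) (Equiv.Perm (ZMod n)) where
  smul g s := rho (.r g.2.toAdd) * s * (rho g.1)⁻¹
  one_smul s := by
    change rho (.r 0) * s * (rho 1)⁻¹ = s
    simp
  mul_smul g h s := by
    change rho (.r (g.2.toAdd + h.2.toAdd)) * s * (rho (g.1 * h.1))⁻¹ =
      rho (.r g.2.toAdd) * (rho (.r h.2.toAdd) * s * (rho h.1)⁻¹) * (rho g.1)⁻¹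
    rw [← DihedralGroup.r_mul_r, map_mul, map_mul]
    group

theorem even_succ (m : ℕ) [NeZero (2 * m)] (i : ZMod (2 * m)) : Even (i + 1) ↔ ¬ Even i := by
  have hp : ∀ j : ZMod (2 * m), Even j → ZMod.castHom (dvd_mul_right 2 m) (ZMod 2) j = 0 := by
    rintro j ⟨r, rfl⟩
    rw [map_add]
    exact CharTwo.add_self_eq_zero _
  constructor
  · intro h1 h2
    have h3 := hp _ h1
    rw [map_add, hp _ h2, map_one, zero_add] at h3
    exact one_ne_zero h3
  · intro h
    obtain ⟨v, rfl⟩ := ZMod.natCast_zmod_surjective i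
    rcases Nat.even_or_odd v with hv | hv
    · exact absurd (hv.map (Nat.castRingHom _)) h
    · have := (hv.add_one).map (Nat.castRingHom (ZMod (2 * m)))
      simpa using this

theorem not_fix_iff (i : ZMod n) : (∀ x, -x - i ≠ x) ↔ ¬ Even i := by
  rw [← not_exists, not_iff_not]
  constructor
  · rintro ⟨x, hx⟩
    exact ⟨-x, by linear_combination -hx⟩
  · rintro ⟨x, hx⟩
    exact ⟨-x, by linear_combination -hx⟩

open Classical in
/-- number of odd classes -/
theorem card_odd (m : ℕ) [NeZero (2 * m)] :
    Fintype.card {i : ZMod (2 * m) // ¬ Even i} = m := by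
  have h1 : Fintype.card {i : ZMod (2 * m) // ¬ Even i} = Fintype.card {i : ZMod (2 * m) // Even i} :=
    Fintype.card_congr ((Equiv.addRight 1).subtypeEquiv fun i => (even_succ m i).symm)
  have h2 := Fintype.card_subtype_compl (fun i : ZMod (2 * m) => Even i)
  have h3 := Fintype.card_subtype_le (fun i : ZMod (2 * m) => Even i)
  rw [ZMod.card] at h2 h3
  omega

theorem sum_orders [NeZero n] (F : ℕ → ℕ) :
    ∑ i : ZMod n, ∑ k : ZMod n, (if addOrderOf i = addOrderOf k then F (addOrderOf k) else 0)
      = ∑ e ∈ n.divisors, φ e ^ 2 * F e := by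
  have hdvd : ∀ k : ZMod n, addOrderOf k ∣ Fintype.card (ZMod n) := fun k => addOrderOf_dvd_card
  rw [Finset.sum_comm]
  have h1 : ∀ k : ZMod n, ∑ i : ZMod n, (if addOrderOf i = addOrderOf k then F (addOrderOf k) else 0)
      = φ (addOrderOf k) * F (addOrderOf k) := by
    intro k
    rw [← Finset.sum_filter, Finset.sum_const, smul_eq_mul,
      IsAddCyclic.card_addOrderOf_eq_totient (hdvd k)]
  rw [Finset.sum_congr rfl fun k _ => h1 k]
  rw [← Finset.sum_fiberwise_of_maps_to (s := Finset.univ) (t := n.divisors)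
    (g := fun k : ZMod n => addOrderOf k)]
  · apply Finset.sum_congr rfl
    intro e he
    rw [Finset.sum_congr rfl (g := fun _ => φ e * F e), Finset.sum_const, smul_eq_mul,
      IsAddCyclic.card_addOrderOf_eq_totient]
    · ring
    · rw [ZMod.card]
      exact Nat.dvd_of_mem_divisors he
    · intro k hk
      rw [(Finset.mem_filter.1 hk).2]
  · intro k _
    rw [Nat.mem_divisors]
    exact ⟨by simpa using hdvd k, NeZero.ne n⟩

/-- weight of an order -/
def wt (n e : ℕ) : ℕ := e ^ (n / e) * (n / e)!

theorem card_fix_r [NeZero n] (i k : ZMod n) :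
    Nat.card {s : Equiv.Perm (ZMod n) // rho (.r k) * s * (rho (.r i))⁻¹ = s} =
      if addOrderOf i = addOrderOf k then wt n (addOrderOf k) else 0 := by
  classical
  rw [card_conj, (semireg_r k).card_centralizer, order_r, ZMod.card]
  congr 1
  rw [(semireg_r i).isConj_iff (semireg_r k), order_r, order_r]

open Classical in
theorem card_fix_sr [NeZero n] (hn : 3 ≤ n) (i k : ZMod n) :
    Nat.card {s : Equiv.Perm (ZMod n) // rho (.r k) * s * (rho (.sr i))⁻¹ = s} =
      if ¬ Even i ∧ addOrderOf k = 2 then wt n 2 else 0 := by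
  rw [card_conj, (semireg_r k).card_centralizer, order_r, ZMod.card]
  simp only [isConj_sr hn, not_fix_iff]
  split_ifs with h
  · rw [h.2]
    rfl
  · rfl

theorem sum_sr [NeZero n] (hn : 3 ≤ n) :
    ∑ i : ZMod n, ∑ k : ZMod n,
      Nat.card {s : Equiv.Perm (ZMod n) // rho (.r k) * s * (rho (.sr i))⁻¹ = s} =
      if Even n then (n / 2) * Nat.doubleFactorial n else 0 := by
  classical
  simp only [card_fix_sr hn]
  split_ifs with h
  · obtain ⟨m, rfl⟩ := h.two_dvd
    have h1 : ∀ i : ZMod (2 * m), ∑ k : ZMod (2 * m),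
        (if ¬ Even i ∧ addOrderOf k = 2 then wt (2 * m) 2 else 0) =
        if ¬ Even i then wt (2 * m) 2 else 0 := by
      intro i
      by_cases hi : Even i
      · simp [hi]
      · simp only [hi, not_false_eq_true, true_and, if_true]
        rw [← Finset.sum_filter, Finset.sum_const, smul_eq_mul,
          IsAddCyclic.card_addOrderOf_eq_totient (by rw [ZMod.card]; exact dvd_mul_right 2 m)]
        simp
    rw [Finset.sum_congr rfl fun i _ => h1 i, ← Finset.sum_filter, Finset.sum_const, smul_eq_mul,
      ← Fintype.card_subtype, card_odd, Nat.doubleFactorial_two_mul, wt,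
      Nat.mul_div_cancel_left _ (by norm_num)]
  · apply Finset.sum_eq_zero
    intro i _
    apply Finset.sum_eq_zero
    intro k _
    rw [if_neg]
    rintro ⟨-, hk⟩
    apply h
    rw [even_iff_two_dvd, ← hk]
    simpa using (addOrderOf_dvd_card : addOrderOf k ∣ Fintype.card (ZMod n))

theorem burnside [NeZero n] (hn : 3 ≤ n) :
    letI := act n
    Nat.card (Quotient (MulAction.orbitRel (Grp n) (Equiv.Perm (ZMod n)))) * (2 * n ^ 2) =
      (∑ d ∈ n.divisors, (Nat.totient (n / d)) ^ 2 * (n / d) ^ d * d !) +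
          if Even n then (n / 2) * Nat.doubleFactorial n else 0 := by
  classical
  letI := act n
  have hB := MulAction.sum_card_fixedBy_eq_card_orbits_mul_card_group (Grp n)
    (Equiv.Perm (ZMod n))
  have hc : Fintype.card (Grp n) = 2 * n ^ 2 := by
    rw [Fintype.card_prod, DihedralGroup.card, Fintype.card_multiplicative, ZMod.card]
    ring
  rw [hc] at hB
  rw [Nat.card_eq_fintype_card]
  refine hB.symm.trans ?_
  have h1 : ∀ g : Grp n, Fintype.card (MulAction.fixedBy (Equiv.Perm (ZMod n)) g) =
      Nat.card {s : Equiv.Perm (ZMod n) // rho (.r g.2.toAdd) * s * (rho g.1)⁻¹ = s} := by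
    intro g
    rw [← Nat.card_eq_fintype_card]
    rfl
  rw [Finset.sum_congr rfl fun g _ => h1 g, Fintype.sum_prod_type,
    ← DihedralGroup.equivSum.symm.sum_comp, Fintype.sum_sum_type]
  congr 1
  · have h2 := sum_orders (n := n) (wt n)
    rw [← Nat.sum_div_divisors] at h2
    refine Eq.trans ?_ (h2.trans ?_)
    · apply Finset.sum_congr rfl
      intro i _
      rw [← Multiplicative.ofAdd.sum_comp]
      apply Finset.sum_congr rfl
      intro k _
      exact card_fix_r i k
    · apply Finset.sum_congr rfl
      intro d hd
      rw [wt, Nat.div_div_self (Nat.dvd_of_mem_divisors hd) (NeZero.ne n), mul_assoc]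
  · rw [← sum_sr hn]
    apply Finset.sum_congr rfl
    intro i _
    rw [← Multiplicative.ofAdd.sum_comp]
    rfl

theorem card_quot [NeZero n] :
    letI := act n
    Nat.card (Quot (fun x y : {x : ZMod n → ZMod n // Function.Bijective x} =>
        ∃ (m k δ : ZMod n), (δ = 1 ∨ δ = -1) ∧
          ∀ i : ZMod n, y.1 i = x.1 (δ * i + m) + k)) =
    Nat.card (Quotient (MulAction.orbitRel (Grp n) (Equiv.Perm (ZMod n)))) := by
  letI := act n
  symm
  apply Nat.card_congr
  let e : Equiv.Perm (ZMod n) ≃ {x : ZMod n → ZMod n // Function.Bijective x} :=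
    ⟨fun s => ⟨s, s.bijective⟩, fun x => Equiv.ofBijective x.1 x.2, fun s => by ext; rfl,
      fun x => rfl⟩
  refine Quot.congr e ?_
  intro s t
  have hsymm : (MulAction.orbitRel (Grp n) (Equiv.Perm (ZMod n))) s t ↔
      ∃ g : Grp n, rho (.r g.2.toAdd) * s * (rho g.1)⁻¹ = t :=
    ⟨fun h => Setoid.symm' _ h, fun h => Setoid.symm' _ h⟩
  refine hsymm.trans ?_
  change _ ↔ ∃ (m k δ : ZMod n), (δ = 1 ∨ δ = -1) ∧ ∀ i : ZMod n, t i = s (δ * i + m) + k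
  constructor
  · rintro ⟨⟨a | a, k⟩, rfl⟩
    · refine ⟨-a, k.toAdd, 1, Or.inl rfl, fun i => ?_⟩
      rw [← map_inv, DihedralGroup.inv_r, Equiv.Perm.mul_apply, Equiv.Perm.mul_apply, rho_r, rho_r,
        one_mul]
    · refine ⟨-a, k.toAdd, -1, Or.inr rfl, fun i => ?_⟩
      rw [← map_inv, DihedralGroup.inv_sr, Equiv.Perm.mul_apply, Equiv.Perm.mul_apply, rho_r,
        rho_sr, neg_one_mul, sub_eq_add_neg]
  · rintro ⟨m, k, δ, rfl | rfl, h⟩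
    · refine ⟨(.r (-m), Multiplicative.ofAdd k), Equiv.ext fun i => ?_⟩
      rw [h, ← map_inv, DihedralGroup.inv_r, Equiv.Perm.mul_apply, Equiv.Perm.mul_apply, rho_r,
        rho_r, one_mul, neg_neg]
      rfl
    · refine ⟨(.sr (-m), Multiplicative.ofAdd k), Equiv.ext fun i => ?_⟩
      rw [h, ← map_inv, DihedralGroup.inv_sr, Equiv.Perm.mul_apply, Equiv.Perm.mul_apply, rho_r,
        rho_sr, neg_one_mul, sub_neg_eq_add]
      rfl

end CycEq

/-- Theorem 4 (cycles up to rotation only): the number of equivalence classes of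
bijections `x : ZMod n → ZMod n` under the relation identifying `x` and `y` when
`y i = x (δ * i + m) + k` for some `m, k : ZMod n` and sign `δ = ±1`, equals
`(1/(2n²)) * (Σ_{d ∣ n} φ(n/d)² (n/d)^d d! + (if n even then (n/2)·n!! else 0))`. -/
theorem cycles_equivalence_classes (n : ℕ) (hn : 3 ≤ n) :
    (Nat.card (Quot (fun x y : {x : ZMod n → ZMod n // Function.Bijective x} =>
        ∃ (m k δ : ZMod n), (δ = 1 ∨ δ = -1) ∧
          ∀ i : ZMod n, y.1 i = x.1 (δ * i + m) + k)) : ℚ) =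
      (1 / (2 * (n : ℚ) ^ 2)) *
        ((∑ d ∈ n.divisors, (Nat.totient (n / d)) ^ 2 * (n / d) ^ d * d ! : ℕ) +
          if Even n then ((n / 2) * Nat.doubleFactorial n : ℕ) else 0) := by
  haveI : NeZero n := ⟨by omega⟩
  rw [CycEq.card_quot]
  have h := CycEq.burnside (n := n) hn
  have hn0 : (n : ℚ) ≠ 0 := Nat.cast_ne_zero.2 (by omega)
  have h' := congrArg (Nat.cast : ℕ → ℚ) h
  rw [Nat.cast_mul, Nat.cast_add] at h'
  rw [one_div, eq_inv_mul_iff_mul_eq₀ (by positivity), mul_comm]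
  refine Eq.trans ?_ (h'.trans ?_)
  · push_cast
    rfl
  · congr 1
end

section
/- Let p > 2 be a prime. Define the equivalence relation ≈_S on the set Y_p of bijections x : ZMod p → ZMod p by x ≈_S y if and only if there exist m, k : ZMod p and signs δ, ε ∈ {1, -1} ⊆ ZMod p such that for all i : ZMod p, y i = ε * x (δ * i + m) + k. Then the number of equivalence classes of Y_p under ≈_S equals (1/(4p)) * ( (p-1)² + p * (p-1)!! + (p-1)! ). -/
open Nat

/-- The dihedral group acts on `ZMod p` by `i ↦ i + m` and `i ↦ -i - m`. -/
def dihHom (p : ℕ) : DihedralGroup p →* Equiv.Perm (ZMod p) where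
  toFun g := match g with
    | .r m => Equiv.addRight m
    | .sr m => Equiv.subLeft (-m)
  map_one' := by
    ext i
    change i + 0 = i
    rw [add_zero]
  map_mul' a b := by
    rcases a with i | i <;> rcases b with j | j <;> ext x <;>
      simp <;> ring

theorem dihHom_r (p : ℕ) (m i : ZMod p) : dihHom p (.r m) i = i + m := rfl

theorem dihHom_sr (p : ℕ) (m i : ZMod p) : dihHom p (.sr m) i = -m - i := rfl

/-- Two-sided action on permutations. -/
instance dihAct (p : ℕ) :
    MulAction (DihedralGroup p × DihedralGroup p) (Equiv.Perm (ZMod p)) where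
  smul g x := dihHom p g.1 * x * (dihHom p g.2)⁻¹
  one_smul x := by
    change dihHom p 1 * x * (dihHom p 1)⁻¹ = x
    simp
  mul_smul a b x := by
    change dihHom p (a.1 * b.1) * x * (dihHom p (a.2 * b.2))⁻¹ =
      dihHom p a.1 * (dihHom p b.1 * x * (dihHom p b.2)⁻¹) * (dihHom p a.2)⁻¹
    simp [mul_assoc]

theorem dih_smul_def (p : ℕ) (g : DihedralGroup p × DihedralGroup p) (x : Equiv.Perm (ZMod p)) :
    g • x = dihHom p g.1 * x * (dihHom p g.2)⁻¹ := rfl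

theorem cycleType_r_zero (p : ℕ) [NeZero p] : (dihHom p (.r 0)).cycleType = 0 := by
  rw [Equiv.Perm.cycleType_eq_zero]
  exact map_one _

theorem cycleType_r (p : ℕ) [Fact p.Prime] (m : ZMod p) (hm : m ≠ 0) :
    (dihHom p (.r m)).cycleType = {p} := by
  have hp : p.Prime := Fact.out
  have hs : (dihHom p (.r m)).support = Finset.univ := by
    ext i; simp [dihHom_r, hm]
  have hne : dihHom p (.r m) ≠ 1 := by
    intro h
    have := congrArg (fun f => f 0) h
    simp [dihHom_r, hm] at this
  have hpow : (dihHom p (.r m)) ^ p = 1 := by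
    rw [← map_pow, DihedralGroup.r_pow]
    simp
  have ho : orderOf (dihHom p (.r m)) = p := orderOf_eq_prime hpow hne
  obtain ⟨n, hn⟩ := Equiv.Perm.cycleType_prime_order (σ := dihHom p (.r m)) (by rwa [ho])
  have hsum := Equiv.Perm.sum_cycleType (dihHom p (.r m))
  rw [hs, hn, ho] at hsum
  simp [ZMod.card] at hsum
  have : n = 0 := hsum.resolve_right hp.ne_zero
  rw [hn, ho, this]
  rfl

theorem cycleType_sr (p : ℕ) [Fact p.Prime] (hp2 : 2 < p) (m : ZMod p) :
    (dihHom p (.sr m)).cycleType = Multiset.replicate ((p - 1) / 2) 2 := by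
  have hp : p.Prime := Fact.out
  have h2 : (2 : ZMod p) ≠ 0 := by
    intro h
    have : ((2 : ℕ) : ZMod p) = 0 := by exact_mod_cast h
    rw [ZMod.natCast_eq_zero_iff] at this
    exact absurd (Nat.le_of_dvd (by norm_num) this) (by omega)
  have hs : (dihHom p (.sr m)).support = Finset.univ.erase (-m / 2) := by
    ext i
    simp only [Equiv.Perm.mem_support, dihHom_sr, Finset.mem_erase, Finset.mem_univ, and_true,
      ne_eq, not_iff_not]
    rw [eq_div_iff h2]
    constructor <;> intro h <;> linear_combination -h
  have hne : dihHom p (.sr m) ≠ 1 := by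
    intro h
    rw [← Equiv.Perm.support_eq_empty_iff, hs] at h
    have := congrArg Finset.card h
    rw [Finset.card_erase_of_mem (Finset.mem_univ _), Finset.card_univ, ZMod.card] at this
    simp at this
    omega
  have hpow : (dihHom p (.sr m)) ^ 2 = 1 := by
    rw [← map_pow, pow_two, DihedralGroup.sr_mul_self, map_one]
  have ho : orderOf (dihHom p (.sr m)) = 2 := orderOf_eq_prime hpow hne
  obtain ⟨n, hn⟩ := Equiv.Perm.cycleType_prime_order (σ := dihHom p (.sr m))
    (by rw [ho]; exact Nat.prime_two)
  have hsum := Equiv.Perm.sum_cycleType (dihHom p (.sr m))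
  rw [hs, hn, ho, Finset.card_erase_of_mem (Finset.mem_univ _), Finset.card_univ,
    ZMod.card, Multiset.sum_replicate, smul_eq_mul] at hsum
  rw [hn, ho]
  congr 1
  omega

theorem card_fixed_of_ne (p : ℕ) [NeZero p] (g h : DihedralGroup p)
    (H : (dihHom p g).cycleType ≠ (dihHom p h).cycleType) :
    Nat.card (MulAction.fixedBy (Equiv.Perm (ZMod p)) (g, h)) = 0 := by
  rw [Nat.card_eq_zero]
  left
  constructor
  rintro ⟨x, hx⟩
  rw [MulAction.mem_fixedBy, dih_smul_def] at hx
  apply H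
  have : dihHom p g = x * dihHom p h * x⁻¹ := by
    rw [mul_inv_eq_iff_eq_mul] at hx
    rw [← hx]; group
  rw [this, Equiv.Perm.cycleType_conj]

theorem card_fixed_of_eq (p : ℕ) [NeZero p] (g h : DihedralGroup p)
    (H : (dihHom p g).cycleType = (dihHom p h).cycleType) :
    Nat.card (MulAction.fixedBy (Equiv.Perm (ZMod p)) (g, h)) =
      Nat.card (Subgroup.centralizer {dihHom p g}) := by
  obtain ⟨c, hc⟩ := isConj_iff.1 (Equiv.Perm.isConj_iff_cycleType_eq.2 H)
  apply Nat.card_congr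
  refine (Equiv.mulRight c).subtypeEquiv ?_
  intro x
  rw [MulAction.mem_fixedBy, dih_smul_def, Subgroup.mem_centralizer_singleton_iff, ← hc]
  simp only [Equiv.coe_mulRight]
  rw [mul_inv_eq_iff_eq_mul]
  constructor
  · intro h
    rw [← mul_assoc, h]; group
  · intro h
    rw [← mul_right_cancel_iff (a := c), mul_assoc, ← h]; group

theorem sum_dihedral (p : ℕ) [NeZero p] (f : DihedralGroup p → ℕ) :
    ∑ g, f g = ∑ m : ZMod p, f (.r m) + ∑ m : ZMod p, f (.sr m) := by
  let e : ZMod p ⊕ ZMod p ≃ DihedralGroup p :=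
    { toFun := Sum.elim .r .sr
      invFun := fun g => match g with
        | .r m => .inl m
        | .sr m => .inr m
      left_inv := by rintro (m | m) <;> rfl
      right_inv := by rintro (m | m) <;> rfl }
  rw [← e.sum_comp, Fintype.sum_sum_type]
  rfl

theorem sum_fixed (p : ℕ) [Fact p.Prime] (hp2 : 2 < p) :
    ∑ g : DihedralGroup p × DihedralGroup p,
      Nat.card (MulAction.fixedBy (Equiv.Perm (ZMod p)) g) =
      p ! + (p - 1) * ((p - 1) * p) + p * (p * (p - 1)‼) := by
  have hp : p.Prime := Fact.out
  obtain ⟨q, hq⟩ := hp.odd_of_ne_two (by omega)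
  have hq2 : (p - 1) / 2 = q := by omega
  have h0 : ((0 : Multiset ℕ) ≠ {p}) := by simp
  have h1 : ((0 : Multiset ℕ) ≠ Multiset.replicate ((p - 1) / 2) 2) := by
    intro h
    have := congrArg Multiset.card h
    simp at this
    omega
  have h2 : (({p} : Multiset ℕ) ≠ Multiset.replicate ((p - 1) / 2) 2) := by
    intro h
    have := Multiset.eq_of_mem_replicate (h ▸ Multiset.mem_singleton_self p)
    omega
  have c0 := cycleType_r_zero p
  have cr := cycleType_r p
  have cs := cycleType_sr p hp2
  have rs : ∀ m k, Nat.card (MulAction.fixedBy (Equiv.Perm (ZMod p))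
      ((.r m : DihedralGroup p), (.sr k : DihedralGroup p))) = 0 := by
    intro m k
    apply card_fixed_of_ne
    by_cases hm : m = 0
    · rw [hm, c0, cs]; exact h1
    · rw [cr m hm, cs]; exact h2
  have sr : ∀ m k, Nat.card (MulAction.fixedBy (Equiv.Perm (ZMod p))
      ((.sr m : DihedralGroup p), (.r k : DihedralGroup p))) = 0 := by
    intro m k
    apply card_fixed_of_ne
    by_cases hm : k = 0
    · rw [hm, c0, cs]; exact h1.symm
    · rw [cr k hm, cs]; exact h2.symm
  have ss : ∀ m k, Nat.card (MulAction.fixedBy (Equiv.Perm (ZMod p))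
      ((.sr m : DihedralGroup p), (.sr k : DihedralGroup p))) = (p - 1)‼ := by
    intro m k
    rw [card_fixed_of_eq _ _ _ (by rw [cs, cs]), Equiv.Perm.nat_card_centralizer, cs, hq2,
      Multiset.toFinset_replicate, if_neg (by omega), ZMod.card]
    simp only [Multiset.sum_replicate, Multiset.prod_replicate, Finset.prod_singleton,
      Multiset.count_replicate_self, smul_eq_mul]
    rw [show p - q * 2 = 1 by omega, show p - 1 = 2 * q by omega, Nat.doubleFactorial_two_mul]
    simp
  have r00 : Nat.card (MulAction.fixedBy (Equiv.Perm (ZMod p))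
      ((.r 0 : DihedralGroup p), (.r 0 : DihedralGroup p))) = p ! := by
    rw [card_fixed_of_eq _ _ _ rfl, Equiv.Perm.nat_card_centralizer, c0]
    simp [ZMod.card]
  have r0 : ∀ k, k ≠ 0 → Nat.card (MulAction.fixedBy (Equiv.Perm (ZMod p))
      ((.r 0 : DihedralGroup p), (.r k : DihedralGroup p))) = 0 := by
    intro k hk
    apply card_fixed_of_ne
    rw [c0, cr k hk]; exact h0
  have r0' : ∀ k, k ≠ 0 → Nat.card (MulAction.fixedBy (Equiv.Perm (ZMod p))
      ((.r k : DihedralGroup p), (.r 0 : DihedralGroup p))) = 0 := by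
    intro k hk
    apply card_fixed_of_ne
    rw [c0, cr k hk]; exact h0.symm
  have rr : ∀ m k, m ≠ 0 → k ≠ 0 → Nat.card (MulAction.fixedBy (Equiv.Perm (ZMod p))
      ((.r m : DihedralGroup p), (.r k : DihedralGroup p))) = p := by
    intro m k hm hk
    rw [card_fixed_of_eq _ _ _ (by rw [cr m hm, cr k hk]), Equiv.Perm.nat_card_centralizer,
      cr m hm]
    simp [ZMod.card]
  have hcard : (Finset.univ.erase (0 : ZMod p)).card = p - 1 := by
    rw [Finset.card_erase_of_mem (Finset.mem_univ _), Finset.card_univ, ZMod.card]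
  have key : ∑ m : ZMod p, ∑ k : ZMod p, Nat.card (MulAction.fixedBy (Equiv.Perm (ZMod p))
      ((.r m : DihedralGroup p), (.r k : DihedralGroup p))) = p ! + (p - 1) * ((p - 1) * p) := by
    rw [← Finset.add_sum_erase _ _ (Finset.mem_univ (0 : ZMod p))]
    congr 1
    · rw [← Finset.add_sum_erase _ _ (Finset.mem_univ (0 : ZMod p)), r00,
        Finset.sum_eq_zero (fun k hk => r0 k (Finset.ne_of_mem_erase hk)), add_zero]
    · rw [Finset.sum_congr rfl (g := fun _ => (p - 1) * p), Finset.sum_const, hcard, smul_eq_mul]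
      intro m hm
      have hm := Finset.ne_of_mem_erase hm
      rw [← Finset.add_sum_erase _ _ (Finset.mem_univ (0 : ZMod p)), r0' m hm, zero_add,
        Finset.sum_congr rfl (fun k hk => rr m k hm (Finset.ne_of_mem_erase hk)),
        Finset.sum_const, hcard, smul_eq_mul]
  rw [Fintype.sum_prod_type, sum_dihedral]
  simp only [sum_dihedral, rs, sr, ss, Finset.sum_const_zero, add_zero, zero_add, key,
    Finset.sum_const, Finset.card_univ, ZMod.card, smul_eq_mul]

theorem card_quot_eq (p : ℕ) :
    Nat.card (Quot (fun x y : {x : ZMod p → ZMod p // Function.Bijective x} =>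
        ∃ (m k δ ε : ZMod p), (δ = 1 ∨ δ = -1) ∧ (ε = 1 ∨ ε = -1) ∧
          ∀ i : ZMod p, y.1 i = ε * x.1 (δ * i + m) + k)) =
    Nat.card (Quotient (MulAction.orbitRel (DihedralGroup p × DihedralGroup p)
      (Equiv.Perm (ZMod p)))) := by
  apply Nat.card_congr
  let e : {x : ZMod p → ZMod p // Function.Bijective x} ≃ Equiv.Perm (ZMod p) :=
    { toFun := fun x => Equiv.ofBijective x.1 x.2
      invFun := fun x => ⟨x, x.bijective⟩
      left_inv := fun x => rfl
      right_inv := fun x => by ext; rfl }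
  refine Quot.congr e ?_
  intro x y
  have he : ∀ (z : {x : ZMod p → ZMod p // Function.Bijective x}) i, e z i = z.1 i :=
    fun _ _ => rfl
  change _ ↔ (MulAction.orbitRel _ _) (e x) (e y)
  rw [Setoid.comm', MulAction.orbitRel_apply, MulAction.mem_orbit_iff]
  constructor
  · rintro ⟨m, k, δ, ε, hδ, hε, H⟩
    obtain ⟨g, hg⟩ : ∃ g, ∀ i, dihHom p g i = δ * i + m := by
      rcases hδ with rfl | rfl
      · exact ⟨.r m, fun i => by rw [dihHom_r]; ring⟩
      · exact ⟨.sr (-m), fun i => by rw [dihHom_sr]; ring⟩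
    obtain ⟨h, hh⟩ : ∃ g, ∀ i, dihHom p g i = ε * i + k := by
      rcases hε with rfl | rfl
      · exact ⟨.r k, fun i => by rw [dihHom_r]; ring⟩
      · exact ⟨.sr (-k), fun i => by rw [dihHom_sr]; ring⟩
    refine ⟨(h, g⁻¹), ?_⟩
    ext1 i
    rw [dih_smul_def, map_inv, inv_inv, Equiv.Perm.mul_apply, Equiv.Perm.mul_apply, hg, hh, he,
      he, H]
  · rintro ⟨⟨h, g⟩, H⟩
    obtain ⟨δ, m, hδ, hg⟩ : ∃ δ m, (δ = 1 ∨ δ = -1) ∧ ∀ i, dihHom p g⁻¹ i = δ * i + m := by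
      rcases g⁻¹ with m | m
      · exact ⟨1, m, .inl rfl, fun i => by rw [dihHom_r]; ring⟩
      · exact ⟨-1, -m, .inr rfl, fun i => by rw [dihHom_sr]; ring⟩
    obtain ⟨ε, k, hε, hh⟩ : ∃ δ m, (δ = 1 ∨ δ = -1) ∧ ∀ i, dihHom p h i = δ * i + m := by
      rcases h with m | m
      · exact ⟨1, m, .inl rfl, fun i => by rw [dihHom_r]; ring⟩
      · exact ⟨-1, -m, .inr rfl, fun i => by rw [dihHom_sr]; ring⟩
    refine ⟨m, k, δ, ε, hδ, hε, fun i => ?_⟩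
    rw [← he y, ← H, dih_smul_def, ← map_inv, Equiv.Perm.mul_apply, Equiv.Perm.mul_apply, hg,
      hh, he]

/-- Corollary (cycles in `K_p` up to rotation and reflection, `p > 2` prime):
the number of equivalence classes equals `(1/(4p)) * ((p-1)² + p(p-1)!! + (p-1)!)`. -/
theorem cycles_similarity_classes_prime (p : ℕ) (hp : p.Prime) (hp2 : 2 < p) :
    (Nat.card (Quot (fun x y : {x : ZMod p → ZMod p // Function.Bijective x} =>
        ∃ (m k δ ε : ZMod p), (δ = 1 ∨ δ = -1) ∧ (ε = 1 ∨ ε = -1) ∧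
          ∀ i : ZMod p, y.1 i = ε * x.1 (δ * i + m) + k)) : ℚ) =
      (1 / (4 * (p : ℚ))) *
        (((p - 1) ^ 2 + p * Nat.doubleFactorial (p - 1) + (p - 1)! : ℕ)) := by
  classical
  haveI : Fact p.Prime := ⟨hp⟩
  rw [card_quot_eq]
  have B := MulAction.sum_card_fixedBy_eq_card_orbits_mul_card_group
    (DihedralGroup p × DihedralGroup p) (Equiv.Perm (ZMod p))
  simp only [← Nat.card_eq_fintype_card] at B
  rw [sum_fixed p hp2, Nat.card_prod, DihedralGroup.nat_card,
    ← Nat.mul_factorial_pred hp.ne_zero] at B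
  have hp0 : (p : ℚ) ≠ 0 := by exact_mod_cast hp.ne_zero
  have B' := congrArg (Nat.cast : ℕ → ℚ) B
  push_cast at B' ⊢
  field_simp
  apply mul_left_cancel₀ hp0
  linear_combination -B'
end

section
/- Let p > 2 be a prime. Define the equivalence relation ≈_E on the set Y_p of bijections x : ZMod p → ZMod p by x ≈_E y if and only if there exist m, k : ZMod p and a sign δ ∈ {1, -1} ⊆ ZMod p such that for all i : ZMod p, y i = x (δ * i + m) + k. Then the number of equivalence classes of Y_p under ≈_E equals (1/(2p)) * ( (p-1)² + (p-1)! ). -/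
open Nat

namespace CycAux

/-- Anti-action of the dihedral group on indices. -/
def rho {p : ℕ} : DihedralGroup p → ZMod p → ZMod p
  | .r a, i => i + a
  | .sr a, i => a - i

lemma rho_mul {p : ℕ} (g h : DihedralGroup p) (i : ZMod p) :
    rho (g * h) i = rho h (rho g i) := by
  cases g <;> cases h <;> simp [rho] <;> ring

lemma rho_one {p : ℕ} (i : ZMod p) : rho (1 : DihedralGroup p) i = i := by
  rw [DihedralGroup.one_def]; simp [rho]

lemma rho_bij {p : ℕ} (g : DihedralGroup p) : Function.Bijective (rho g) := by
  refine Function.bijective_iff_has_inverse.2 ⟨rho g⁻¹, fun i => ?_, fun i => ?_⟩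
  · rw [← rho_mul, mul_inv_cancel, rho_one]
  · rw [← rho_mul, inv_mul_cancel, rho_one]

abbrev X (p : ℕ) := {x : ZMod p → ZMod p // Function.Bijective x}

abbrev G (p : ℕ) := DihedralGroup p × Multiplicative (ZMod p)

instance act (p : ℕ) : MulAction (G p) (X p) where
  smul g x := ⟨fun i => x.1 (rho g.1 i) + g.2.toAdd,
    (Equiv.addRight g.2.toAdd).bijective.comp (x.2.comp (rho_bij g.1))⟩
  one_smul x := by
    apply Subtype.ext
    funext i
    change x.1 (rho 1 i) + 0 = x.1 i
    rw [rho_one, add_zero]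
  mul_smul g h x := by
    apply Subtype.ext
    funext i
    change x.1 (rho (g.1 * h.1) i) + (g.2.toAdd + h.2.toAdd)
      = x.1 (rho h.1 (rho g.1 i)) + h.2.toAdd + g.2.toAdd
    rw [rho_mul]; ring

lemma smul_apply {p : ℕ} (g : DihedralGroup p) (k : Multiplicative (ZMod p)) (x : X p)
    (i : ZMod p) : ((g, k) • x : X p).1 i = x.1 (rho g i) + k.toAdd := rfl

lemma mem_fixed {p : ℕ} (g : DihedralGroup p) (k : Multiplicative (ZMod p)) (x : X p) :
    x ∈ MulAction.fixedBy (X p) ((g, k) : G p) ↔ ∀ i, x.1 (rho g i) + k.toAdd = x.1 i := by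
  rw [MulAction.mem_fixedBy, Subtype.ext_iff, funext_iff]
  rfl

lemma rel_iff {p : ℕ} (x y : X p) :
    (∃ (m k δ : ZMod p), (δ = 1 ∨ δ = -1) ∧ ∀ i : ZMod p, y.1 i = x.1 (δ * i + m) + k) ↔
      (MulAction.orbitRel (G p) (X p)) y x := by
  rw [MulAction.orbitRel_apply, MulAction.mem_orbit_iff]
  constructor
  · rintro ⟨m, k, δ, rfl | rfl, h⟩
    · refine ⟨(.r m, Multiplicative.ofAdd k), Subtype.ext (funext fun i => ?_)⟩
      rw [smul_apply, h]; simp [rho]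
    · refine ⟨(.sr m, Multiplicative.ofAdd k), Subtype.ext (funext fun i => ?_)⟩
      rw [smul_apply, h]; simp only [rho, toAdd_ofAdd]; congr 2; ring
  · rintro ⟨⟨g, k⟩, rfl⟩
    cases g with
    | r a => exact ⟨a, k.toAdd, 1, Or.inl rfl, fun i => by rw [smul_apply]; simp [rho]⟩
    | sr a =>
      exact ⟨a, k.toAdd, -1, Or.inr rfl, fun i => by
        rw [smul_apply]; simp only [rho]; congr 2; ring⟩

lemma card_X (p : ℕ) [NeZero p] : Nat.card (X p) = p ! := by
  rw [Nat.card_congr (Equiv.ofBijective.{1,1} _ ?_ : X p ≃ Equiv.Perm (ZMod p)),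
    Nat.card_perm, Nat.card_zmod]
  · exact fun x => Equiv.ofBijective x.1 x.2
  · constructor
    · intro x y h
      apply Subtype.ext
      funext i
      exact congrArg (fun e : Equiv.Perm (ZMod p) => e i) h
    · intro e
      exact ⟨⟨e, e.bijective⟩, by ext; rfl⟩

lemma fixed_sr {p : ℕ} [Fact p.Prime] (hp2 : 2 < p) (a : ZMod p)
    (k : Multiplicative (ZMod p)) :
    Nat.card (MulAction.fixedBy (X p) ((.sr a, k) : G p)) = 0 := by
  have h2 : (2 : ZMod p) ≠ 0 := by
    intro h
    have : ((2 : ℕ) : ZMod p) = 0 := by exact_mod_cast h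
    rw [ZMod.natCast_eq_zero_iff] at this
    exact absurd (Nat.le_of_dvd (by norm_num) this) (by omega)
  rw [Nat.card_eq_zero]
  left
  refine ⟨?_⟩
  rintro ⟨x, hx⟩
  rw [mem_fixed] at hx
  simp only [rho] at hx
  have h1 := hx 0
  have h3 := hx (a - 0)
  have hk : k.toAdd = 0 := by
    rw [sub_sub_cancel] at h3
    have : 2 * k.toAdd = 0 := by linear_combination h1 + h3
    exact (mul_eq_zero.1 this).resolve_left h2
  have key : ∀ i, 2 * i = a := fun i => by
    have := hx i
    rw [hk, add_zero] at this
    linear_combination -(x.2.1 this)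
  have h4 := key 0
  have h5 := key 1
  apply h2
  linear_combination h5 - h4

lemma fixed_r {p : ℕ} [Fact p.Prime] (a : ZMod p) (k : Multiplicative (ZMod p)) :
    Nat.card (MulAction.fixedBy (X p) ((.r a, k) : G p)) =
      if a = 0 then (if k.toAdd = 0 then p ! else 0) else (if k.toAdd = 0 then 0 else p) := by
  split_ifs with ha hk hk
  · rw [← card_X p]
    refine Nat.card_congr (Equiv.subtypeUnivEquiv fun x => ?_)
    rw [mem_fixed]
    intro i
    simp [rho, ha, hk]
  · rw [Nat.card_eq_zero]
    left
    refine ⟨?_⟩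
    rintro ⟨x, hx⟩
    rw [mem_fixed] at hx
    have := hx 0
    simp only [rho, ha, add_zero] at this
    exact hk (by linear_combination this)
  · rw [Nat.card_eq_zero]
    left
    refine ⟨?_⟩
    rintro ⟨x, hx⟩
    rw [mem_fixed] at hx
    have := hx 0
    simp only [rho, hk, add_zero] at this
    exact ha (by linear_combination x.2.1 this)
  · conv_rhs => rw [← Nat.card_zmod p]
    refine Nat.card_eq_of_bijective (fun x => x.1.1 0) ⟨?_, ?_⟩
    · have key : ∀ x : MulAction.fixedBy (X p) ((.r a, k) : G p), ∀ i,
          x.1.1 i = x.1.1 0 - i * a⁻¹ * k.toAdd := by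
        rintro ⟨x, hx⟩ i
        rw [mem_fixed] at hx
        simp only [rho] at hx
        have h : ∀ n : ℕ, x.1 (n * a) = x.1 0 - n * k.toAdd := by
          intro n
          induction n with
          | zero => simp
          | succ n ih =>
            have := hx (n * a)
            push_cast
            rw [add_mul, one_mul]
            linear_combination this + ih
        have h' := h (i * a⁻¹).val
        rw [ZMod.natCast_zmod_val, mul_assoc, inv_mul_cancel₀ ha, mul_one] at h'
        exact h'
      intro x y hxy
      apply Subtype.ext
      apply Subtype.ext
      funext i
      rw [key x i, key y i]
      simp only at hxy
      rw [hxy]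
    · intro c
      have hc : a⁻¹ * k.toAdd ≠ 0 := mul_ne_zero (inv_ne_zero ha) hk
      refine ⟨⟨⟨fun i => c - i * (a⁻¹ * k.toAdd), ?_⟩, ?_⟩, ?_⟩
      · rw [← Finite.injective_iff_bijective]
        intro i j hij
        simp only at hij
        exact mul_right_cancel₀ hc (by linear_combination -hij)
      · rw [mem_fixed]
        intro i
        simp only [rho]
        field_simp
        ring
      · simp

/-- The dihedral group as a sum type. -/
def sumEquiv (p : ℕ) : (ZMod p ⊕ ZMod p) ≃ DihedralGroup p where
  toFun := Sum.elim .r .sr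
  invFun g := match g with
    | .r a => Sum.inl a
    | .sr a => Sum.inr a
  left_inv := by rintro (a | a) <;> rfl
  right_inv := by rintro (a | a) <;> rfl

lemma total {p : ℕ} [Fact p.Prime] (hp2 : 2 < p) :
    ∑ g : G p, Nat.card (MulAction.fixedBy (X p) g) = p ! + (p - 1) * ((p - 1) * p) := by
  rw [Fintype.sum_prod_type, ← (sumEquiv p).sum_comp, Fintype.sum_sum_type]
  simp only [sumEquiv, Equiv.coe_fn_mk, Sum.elim_inl, Sum.elim_inr, fixed_sr hp2, fixed_r,
    Finset.sum_const_zero, add_zero]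
  have hs : ∀ u v : ℕ, ∑ a : ZMod p, (if a = 0 then u else v) = u + (p - 1) * v := by
    intro u v
    rw [← Finset.add_sum_erase _ _ (Finset.mem_univ (0 : ZMod p)), if_pos rfl,
      Finset.sum_congr rfl (g := fun _ => v)
        (fun a ha => if_neg (Finset.ne_of_mem_erase ha))]
    simp [Finset.card_erase_of_mem, ZMod.card]
  have h1 : ∀ a : ZMod p, (∑ k : Multiplicative (ZMod p),
      if a = 0 then (if k.toAdd = 0 then p ! else 0) else (if k.toAdd = 0 then 0 else p)) =
      if a = 0 then p ! else (p - 1) * p := by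
    intro a
    rw [← (Multiplicative.ofAdd : ZMod p ≃ _).sum_comp]
    simp only [toAdd_ofAdd]
    split_ifs
    · rw [hs]; simp
    · rw [hs]; simp
  rw [Finset.sum_congr rfl fun a _ => h1 a, hs]

end CycAux

/-- Corollary (cycles in `K_p` up to rotation only, `p > 2` prime):
the number of equivalence classes equals `(1/(2p)) * ((p-1)² + (p-1)!)`. -/
theorem cycles_equivalence_classes_prime (p : ℕ) (hp : p.Prime) (hp2 : 2 < p) :
    (Nat.card (Quot (fun x y : {x : ZMod p → ZMod p // Function.Bijective x} =>
        ∃ (m k δ : ZMod p), (δ = 1 ∨ δ = -1) ∧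
          ∀ i : ZMod p, y.1 i = x.1 (δ * i + m) + k)) : ℚ) =
      (1 / (2 * (p : ℚ))) * (((p - 1) ^ 2 + (p - 1)! : ℕ)) := by
  haveI : Fact p.Prime := ⟨hp⟩
  classical
  have hq : Nat.card (Quot (fun x y : {x : ZMod p → ZMod p // Function.Bijective x} =>
        ∃ (m k δ : ZMod p), (δ = 1 ∨ δ = -1) ∧
          ∀ i : ZMod p, y.1 i = x.1 (δ * i + m) + k)) =
      Nat.card (Quotient (MulAction.orbitRel (CycAux.G p) (CycAux.X p))) := by
    refine Nat.card_congr (Quot.congr (Equiv.refl _) fun x y => ?_)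
    rw [CycAux.rel_iff]
    exact ⟨fun h => Setoid.symm' _ h, fun h => Setoid.symm' _ h⟩
  rw [hq]
  haveI : Fintype (Quotient (MulAction.orbitRel (CycAux.G p) (CycAux.X p))) := Fintype.ofFinite _
  haveI : (g : CycAux.G p) → Fintype (MulAction.fixedBy (CycAux.X p) g) :=
    fun g => Fintype.ofFinite _
  have hb := MulAction.sum_card_fixedBy_eq_card_orbits_mul_card_group (CycAux.G p) (CycAux.X p)
  simp only [← Nat.card_eq_fintype_card] at hb
  rw [CycAux.total hp2, Nat.card_prod, DihedralGroup.nat_card,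
    Nat.card_congr Multiplicative.toAdd, Nat.card_zmod] at hb
  obtain ⟨q, rfl⟩ : ∃ q, p = q + 1 := ⟨p - 1, by omega⟩
  rw [Nat.factorial_succ] at hb
  simp only [Nat.add_sub_cancel] at hb ⊢
  have hb' := congrArg (Nat.cast : ℕ → ℚ) hb
  push_cast at hb' ⊢
  have hne : (q : ℚ) + 1 ≠ 0 := by positivity
  field_simp
  apply mul_left_cancel₀ hne
  linear_combination -hb'
end

section
/- Let n ≥ 3 be an integer. Then Σ_{k : ZMod n} #{ x : Fin n → ZMod n bijective | ∀ i : Fin n, x i = -(x (n - 1 - i)) - k } equals (n/2) * n!! if n is even and n * (n-1)!! if n is odd. -/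
open Nat

lemma invol_cycleType {α : Type*} [Fintype α] [DecidableEq α] (σ : Equiv.Perm α) (m f : ℕ)
    (hσ : σ ^ 2 = 1) (hc : Fintype.card α = 2 * m + f)
    (hf : (Finset.univ.filter (fun x => σ x = x)).card = f) :
    σ.cycleType = Multiset.replicate m 2 := by
  have h1 : σ.cycleType = Multiset.replicate σ.cycleType.card 2 :=
    Multiset.eq_replicate_card.2 (Equiv.Perm.pow_prime_eq_one_iff.1 hσ)
  have h2 := σ.sum_cycleType
  have h3 : σ.support.card + f = 2 * m + f := by
    rw [← hc, ← hf, ← Finset.card_univ,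
      ← Finset.card_filter_add_card_filter_not (s := Finset.univ) (fun x => σ x = x), add_comm]
    congr 2
  rw [h1] at h2
  simp only [Multiset.sum_replicate, smul_eq_mul] at h2
  have h4 : σ.cycleType.card = m := by omega
  rw [h1, h4]

lemma count_conj {α : Type*} [Fintype α] [DecidableEq α] (σ τ : Equiv.Perm α) (m f : ℕ)
    (hf1 : f ≤ 1) (hc : Fintype.card α = 2 * m + f)
    (hσ : σ ^ 2 = 1) (hτ : τ ^ 2 = 1)
    (hfσ : (Finset.univ.filter (fun x => σ x = x)).card = f)
    (hfτ : (Finset.univ.filter (fun x => τ x = x)).card = f) :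
    Nat.card {g : Equiv.Perm α // g * σ = τ * g} = Nat.doubleFactorial (2 * m) := by
  have cσ := invol_cycleType σ m f hσ hc hfσ
  have cτ := invol_cycleType τ m f hτ hc hfτ
  obtain ⟨c, hcc⟩ := isConj_iff.1 (Equiv.Perm.isConj_iff_cycleType_eq.2 (cσ.trans cτ.symm))
  have e : {g : Equiv.Perm α // g * σ = τ * g} ≃ Subgroup.centralizer {σ} := by
    refine (Equiv.mulLeft c⁻¹).subtypeEquiv ?_
    intro g
    rw [Subgroup.mem_centralizer_singleton_iff, ← hcc]
    simp only [Equiv.coe_mulLeft]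
    constructor
    · intro h
      rw [mul_assoc, h]; group
    · intro h
      have := congrArg (fun z => c * z) h
      simp only [mul_assoc, mul_inv_cancel_left] at this
      rw [this]; group
  rw [Nat.card_congr e, Equiv.Perm.nat_card_centralizer, cσ, Nat.doubleFactorial_two_mul]
  have : (Fintype.card α - (Multiset.replicate m 2).sum)! = 1 := by
    rw [Nat.factorial_eq_one]
    simp only [Multiset.sum_replicate, smul_eq_mul]; omega
  rw [this, one_mul, Multiset.prod_replicate]
  congr 1
  rcases Nat.eq_zero_or_pos m with rfl | hm
  · simp
  · rw [Multiset.toFinset_replicate, if_neg hm.ne']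
    simp

lemma count_strings {α β : Type*} [Fintype α] [DecidableEq α] [Fintype β] [DecidableEq β]
    (σ : Equiv.Perm α) (τ : β → β) (m f : ℕ)
    (hf1 : f ≤ 1) (hc : Fintype.card α = 2 * m + f) (hc' : Fintype.card β = 2 * m + f)
    (hσ : ∀ i, σ (σ i) = i) (hτ : ∀ y, τ (τ y) = y)
    (hfσ : (Finset.univ.filter (fun x => σ x = x)).card = f)
    (hfτ : (Finset.univ.filter (fun x => τ x = x)).card = f) :
    Nat.card {x : α → β // Function.Bijective x ∧ ∀ i, x i = τ (x (σ i))} =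
      Nat.doubleFactorial (2 * m) := by
  let e : α ≃ β := Fintype.equivOfCardEq (hc.trans hc'.symm)
  let t : Equiv.Perm β := ⟨τ, τ, hτ, hτ⟩
  let τ' : Equiv.Perm α := (e.trans t).trans e.symm
  have key := count_conj σ τ' m f hf1 hc (by ext i; simp [pow_two, hσ])
    (by ext i; simp [pow_two, τ', t, hτ]) hfσ (by
      rw [← hfτ]
      refine Finset.card_bij (fun a _ => e a) ?_ ?_ ?_
      · intro a ha
        simpa [τ', t, Equiv.symm_apply_eq] using ha
      · intro a _ b _ h
        exact e.injective h
      · intro b hb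
        refine ⟨e.symm b, ?_, by simp⟩
        simp only [Finset.mem_filter, Finset.mem_univ, true_and] at hb ⊢
        simp [τ', t, hb])
  rw [← key]
  symm
  have hiff : ∀ g : Equiv.Perm α, g * σ = τ' * g ↔ ∀ i, e (g i) = τ (e (g (σ i))) := by
    intro g
    constructor
    · intro h i
      have := congrArg (fun z : Equiv.Perm α => z i) h
      simp only [Equiv.Perm.mul_apply] at this
      rw [this]
      simp [τ', t, hτ]
    · intro h
      ext i
      have := h i
      simp only [Equiv.Perm.mul_apply, τ', t, Equiv.trans_apply, Equiv.coe_fn_mk]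
      rw [this, hτ]; simp
  refine Nat.card_congr (Equiv.ofBijective
    (fun g => ⟨fun i => e (g.1 i), e.bijective.comp g.1.bijective, (hiff g.1).1 g.2⟩) ⟨?_, ?_⟩)
  · rintro ⟨g, hg⟩ ⟨h, hh⟩ H
    simp only [Subtype.mk.injEq] at H ⊢
    ext i
    exact e.injective (congrFun H i)
  · rintro ⟨x, hx, hxx⟩
    refine ⟨⟨(Equiv.ofBijective x hx).trans e.symm, (hiff _).2 ?_⟩, ?_⟩
    · intro i
      simpa using hxx i
    · ext i
      simp

/-- The total number of strings fixed by the elements `(v, s r^k)` (reverse the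
string and replace every label `x` by `-x - k`) is `(n/2)·n!!` if `n` is even and
`n·(n-1)!!` if `n` is odd. -/
theorem fixed_strings_v_srk (n : ℕ) (hn : 3 ≤ n) [NeZero n] :
    ∑ k : ZMod n,
        Nat.card {x : Fin n → ZMod n // Function.Bijective x ∧
          ∀ i : Fin n, x i = -(x i.rev) - k} =
      if Even n then (n / 2) * Nat.doubleFactorial n
      else n * Nat.doubleFactorial (n - 1) := by
  have hrev : ∀ i : Fin n, Fin.revPerm (Fin.revPerm i) = i := by intro i; simp
  have htau : ∀ k y : ZMod n, -(-y - k) - k = y := by intro k y; ring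
  split_ifs with hE
  · obtain ⟨m, hm⟩ := hE
    have hrf : ∀ i : Fin n, i.rev ≠ i := by
      intro i h
      have := congrArg Fin.val h
      rw [Fin.val_rev] at this
      omega
    have hterm : ∀ k : ZMod n, Nat.card {x : Fin n → ZMod n // Function.Bijective x ∧
          ∀ i : Fin n, x i = -(x i.rev) - k} =
          if k.val % 2 = 1 then Nat.doubleFactorial n else 0 := by
      intro k
      split_ifs with hk
      · have := count_strings (Fin.revPerm : Equiv.Perm (Fin n)) (fun y : ZMod n => -y - k) m 0
          (by omega) (by simp; omega) (by simp [ZMod.card]; omega) hrev (htau k)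
          (by simpa [Finset.filter_eq_empty_iff] using hrf)
          (by
            rw [Finset.card_eq_zero, Finset.filter_eq_empty_iff]
            intro y _ h
            have h2 : y + y + k = 0 := by linear_combination -h
            have hd : 2 ∣ n := ⟨m, by omega⟩
            have h3 := congrArg (ZMod.castHom hd (ZMod 2)) h2
            rw [map_add, map_add, map_zero, CharTwo.add_self_eq_zero, zero_add,
              ← ZMod.natCast_zmod_val k, map_natCast, ZMod.natCast_eq_zero_iff] at h3
            omega)
        rw [show 2 * m = n by omega] at this
        exact this
      · rw [Nat.card_eq_zero]
        left
        constructor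
        rintro ⟨x, hx, hxx⟩
        obtain ⟨i, hi⟩ := hx.2 (-((k.val / 2 : ℕ) : ZMod n))
        apply hrf i
        apply hx.1
        have h1 : ((k.val / 2 : ℕ) : ZMod n) + ((k.val / 2 : ℕ) : ZMod n) = k := by
          rw [← Nat.cast_add, show k.val / 2 + k.val / 2 = k.val by omega,
            ZMod.natCast_zmod_val]
        have h2 := hxx i
        rw [hi] at h2 ⊢
        linear_combination h2 + h1
    rw [Finset.sum_congr rfl (fun k _ => hterm k), ← Finset.sum_filter, Finset.sum_const,
      smul_eq_mul]
    congr 1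
    have : n / 2 = (Finset.range (n / 2)).card := by simp
    rw [this]
    symm
    refine Finset.card_bij (fun a _ => ((2 * a + 1 : ℕ) : ZMod n)) ?_ ?_ ?_
    · intro a ha
      rw [Finset.mem_range] at ha
      simp only [Finset.mem_filter, Finset.mem_univ, true_and]
      rw [ZMod.val_natCast_of_lt (by omega)]
      omega
    · intro a ha b hb h
      rw [Finset.mem_range] at ha hb
      have := congrArg ZMod.val h
      rw [ZMod.val_natCast_of_lt (by omega), ZMod.val_natCast_of_lt (by omega)] at this
      omega
    · intro b hb
      simp only [Finset.mem_filter, Finset.mem_univ, true_and] at hb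
      have := ZMod.val_lt b
      refine ⟨b.val / 2, by rw [Finset.mem_range]; omega, ?_⟩
      rw [show 2 * (b.val / 2) + 1 = b.val by omega, ZMod.natCast_zmod_val]
  · obtain ⟨m, hm⟩ := Nat.not_even_iff_odd.1 hE
    have hterm : ∀ k : ZMod n, Nat.card {x : Fin n → ZMod n // Function.Bijective x ∧
          ∀ i : Fin n, x i = -(x i.rev) - k} = Nat.doubleFactorial (n - 1) := by
      intro k
      have := count_strings (Fin.revPerm : Equiv.Perm (Fin n)) (fun y : ZMod n => -y - k) m 1
          le_rfl (by simp; omega) (by simp [ZMod.card]; omega) hrev (htau k)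
          (by
            rw [Finset.card_eq_one]
            refine ⟨⟨m, by omega⟩, ?_⟩
            ext i
            simp only [Finset.mem_filter, Finset.mem_univ, true_and, Finset.mem_singleton,
              Fin.revPerm_apply, Fin.ext_iff, Fin.val_rev]
            omega)
          (by
            have h0 : (2 * m + 1 : ZMod n) = 0 := by
              have h : ((2 * m + 1 : ℕ) : ZMod n) = 0 := by
                rw [← hm]
                exact ZMod.natCast_self n
              push_cast at h
              exact h
            rw [Finset.card_eq_one]
            refine ⟨m * k, ?_⟩
            ext y
            simp only [Finset.mem_filter, Finset.mem_univ, true_and, Finset.mem_singleton]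
            constructor
            · intro h
              linear_combination (m : ZMod n) * h + (y) * h0
            · rintro rfl
              linear_combination (-k) * h0)
      rw [show 2 * m = n - 1 by omega] at this
      exact this
    rw [Finset.sum_congr rfl (fun k _ => hterm k), Finset.sum_const, smul_eq_mul,
      Finset.card_univ, ZMod.card]
end

section
/- Let n ≥ 3 be an integer and let m, k ∈ {0, 1, …, n-1} (regarded as elements of ZMod n). If there exists a bijection x : ZMod n → ZMod n satisfying x i = x (i + m) + k for all i : ZMod n, then gcd(m, n) = gcd(k, n). -/
/-- If some bijection `x : ZMod n → ZMod n` is fixed by `(c^m, r^k)`, i.e.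
`x i = x (i + m) + k` for all `i`, where `m, k ∈ {0, …, n-1}`, then
`gcd(m, n) = gcd(k, n)`. -/
theorem gcd_eq_of_fixed_string (n : ℕ) (hn : 3 ≤ n) (m k : ℕ)
    (hm : m < n) (hk : k < n)
    (hx : ∃ x : ZMod n → ZMod n, Function.Bijective x ∧
      ∀ i : ZMod n, x i = x (i + (m : ZMod n)) + (k : ZMod n)) :
    Nat.gcd m n = Nat.gcd k n := by
  obtain ⟨x, hb, hx⟩ := hx
  have n0 : n ≠ 0 := by omega
  have key : ∀ (j : ℕ), x 0 = x (j • (m : ZMod n)) + j • (k : ZMod n) := by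
    intro j
    induction j with
    | zero => simp
    | succ j ih =>
      rw [ih, hx (j • (m : ZMod n)), succ_nsmul, succ_nsmul, add_assoc,
        add_comm (k : ZMod n)]
  have iff0 : ∀ j : ℕ, j • (m : ZMod n) = 0 ↔ j • (k : ZMod n) = 0 := by
    intro j
    have h := key j
    constructor
    · intro h0
      rw [h0] at h
      exact left_eq_add.mp h
    · intro h0
      rw [h0, add_zero] at h
      exact (hb.1 h).symm
  have ho : addOrderOf (m : ZMod n) = addOrderOf (k : ZMod n) := by
    apply Nat.dvd_antisymm
    · rw [addOrderOf_dvd_iff_nsmul_eq_zero, iff0, addOrderOf_nsmul_eq_zero]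
    · rw [addOrderOf_dvd_iff_nsmul_eq_zero, ← iff0, addOrderOf_nsmul_eq_zero]
  rw [ZMod.addOrderOf_coe m n0, ZMod.addOrderOf_coe k n0] at ho
  rw [Nat.gcd_comm m, Nat.gcd_comm k, ← Nat.div_div_self (Nat.gcd_dvd_left n m) n0, ho,
    Nat.div_div_self (Nat.gcd_dvd_left n k) n0]
end

section
/- Let n ≥ 3 be an integer, let d be a positive divisor of n, and let m, k ∈ {0, 1, …, n-1} satisfy gcd(m, n) = gcd(k, n) = d. Then #{ x : ZMod n → ZMod n bijective | ∀ i : ZMod n, x i = x (i + m) + k } = (n/d)^d * d!. -/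
open Nat

lemma cycleType_addRight_aux (n : ℕ) [NeZero n] (a : ZMod n) (ha : a ≠ 0) :
    (Equiv.addRight a : Equiv.Perm (ZMod n)).cycleType
      = Multiset.replicate (n / addOrderOf a) (addOrderOf a) := by
  set σ : Equiv.Perm (ZMod n) := Equiv.addRight a with hσ
  have hpow : ∀ (j : ℕ) (x : ZMod n), (σ ^ j) x = x + j • a := by
    intro j x
    induction j with
    | zero => simp
    | succ j ih =>
      rw [_root_.pow_succ', Equiv.Perm.mul_apply, ih, succ_nsmul, ← add_assoc]
      rfl
  have hall : ∀ c ∈ σ.cycleType, c = addOrderOf a := by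
    intro c hc
    rw [Equiv.Perm.cycleType_def, Multiset.mem_map] at hc
    obtain ⟨f, hf, rfl⟩ := hc
    have hf' : f ∈ σ.cycleFactorsFinset := hf
    have hcyc := (Equiv.Perm.mem_cycleFactorsFinset_iff.mp hf').1
    obtain ⟨x, hx, -⟩ := id hcyc
    have hfx : f = σ.cycleOf x :=
      Equiv.Perm.cycle_is_cycleOf (Equiv.Perm.mem_support.mpr hx) hf'
    have key : ∀ j : ℕ, f ^ j = 1 ↔ j • a = 0 := by
      intro j
      rw [hcyc.pow_eq_one_iff' hx, hfx, Equiv.Perm.cycleOf_pow_apply_self, hpow]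
      simp
    simp only [Function.comp]
    rw [← hcyc.orderOf]
    apply Nat.dvd_antisymm
    · rw [orderOf_dvd_iff_pow_eq_one, key]
      exact addOrderOf_nsmul_eq_zero a
    · rw [addOrderOf_dvd_iff_nsmul_eq_zero, ← key]
      exact pow_orderOf_eq_one f
  have hrep := Multiset.eq_replicate_of_mem hall
  have hsum := Equiv.Perm.sum_cycleType σ
  have hsupp : σ.support = Finset.univ := by
    ext x
    simp [hσ, ha]
  rw [hsupp, Finset.card_univ, ZMod.card] at hsum
  have hpos : 0 < addOrderOf a := addOrderOf_pos a
  rw [hrep] at hsum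
  simp only [Multiset.sum_replicate, smul_eq_mul] at hsum
  rw [hrep]
  congr 1
  exact (Nat.div_eq_of_eq_mul_left hpos hsum.symm).symm

/-- If `d` is a positive divisor of `n` and `m, k ∈ {0, …, n-1}` satisfy
`gcd(m, n) = gcd(k, n) = d`, then the number of bijections `x : ZMod n → ZMod n`
fixed by `(c^m, r^k)` (i.e. with `x i = x (i + m) + k` for all `i`) is
`(n/d)^d * d!`. -/
theorem card_fixed_strings_cm_rk (n : ℕ) (hn : 3 ≤ n) (d : ℕ) (hd : 0 < d)
    (hdvd : d ∣ n) (m k : ℕ) (hm : m < n) (hk : k < n)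
    (hgm : Nat.gcd m n = d) (hgk : Nat.gcd k n = d) :
    Nat.card {x : ZMod n → ZMod n // Function.Bijective x ∧
        ∀ i : ZMod n, x i = x (i + (m : ZMod n)) + (k : ZMod n)} =
      (n / d) ^ d * d ! := by
  have hn0 : n ≠ 0 := by omega
  haveI : NeZero n := ⟨hn0⟩
  have hom : addOrderOf (m : ZMod n) = n / d := by
    rw [ZMod.addOrderOf_coe m hn0, Nat.gcd_comm, hgm]
  have hok : addOrderOf (-(k : ZMod n)) = n / d := by
    rw [addOrderOf_neg, ZMod.addOrderOf_coe k hn0, Nat.gcd_comm, hgk]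
  have hnd : n / (n / d) = d := Nat.div_div_self hdvd hn0
  set σ : Equiv.Perm (ZMod n) := Equiv.addRight (m : ZMod n) with hσ
  set τ : Equiv.Perm (ZMod n) := Equiv.addRight (-(k : ZMod n)) with hτ
  have hmk : (m : ZMod n) = 0 ↔ -(k : ZMod n) = 0 := by
    rw [← AddMonoid.addOrderOf_eq_one_iff, ← AddMonoid.addOrderOf_eq_one_iff, hom, hok]
  have hct : σ.cycleType = τ.cycleType := by
    by_cases h : (m : ZMod n) = 0
    · have h2 := hmk.mp h
      rw [hσ, hτ, h, h2]
    · rw [hσ, hτ, cycleType_addRight_aux n _ h,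
        cycleType_addRight_aux n _ (fun h' => h (hmk.mpr h')), hom, hok]
  have hcard : Nat.card (Subgroup.centralizer {σ}) = (n / d) ^ d * d ! := by
    rw [Equiv.Perm.nat_card_centralizer]
    by_cases h : (m : ZMod n) = 0
    · have h1 : n / d = 1 := by rw [← hom, h, addOrderOf_zero]
      have h2 : d = n := by rw [← hnd, h1, Nat.div_one]
      have : σ = 1 := by ext x; simp [hσ, h]
      rw [this, h1, h2]
      simp
    · rw [hσ, cycleType_addRight_aux n _ h, hom, hnd]
      have : d * (n / d) = n := Nat.mul_div_cancel' hdvd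
      simp [Multiset.toFinset_replicate, hd.ne', this]
  obtain ⟨g, hg⟩ := isConj_iff.mp (Equiv.Perm.isConj_iff_cycleType_eq.mpr hct)
  rw [← hcard]
  have hgσ : g * σ = τ * g := by rw [← hg]; group
  have cond : ∀ x : Equiv.Perm (ZMod n),
      (∀ i : ZMod n, x i = x (i + (m : ZMod n)) + (k : ZMod n)) ↔ x * σ = τ * x := by
    intro x
    rw [Equiv.ext_iff]
    apply forall_congr'
    intro i
    simp only [hσ, hτ, Equiv.Perm.mul_apply, Equiv.coe_addRight]
    constructor
    · intro h; rw [h]; ring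
    · intro h; rw [h]; ring
  refine Nat.card_congr (Equiv.ofBijective (fun x => ⟨g⁻¹ * Equiv.ofBijective x.1 x.2.1, ?_⟩) ⟨?_, ?_⟩)
  · have h := (cond (Equiv.ofBijective x.1 x.2.1)).mp x.2.2
    rw [Subgroup.mem_centralizer_singleton_iff]
    rw [mul_assoc, h, ← mul_assoc, ← mul_assoc, ← hg]
    group
  · intro x y hxy
    have h := mul_left_cancel (Subtype.ext_iff.mp hxy)
    apply Subtype.ext
    funext i
    exact Equiv.ext_iff.mp h i
  · rintro ⟨c, hc⟩
    rw [Subgroup.mem_centralizer_singleton_iff] at hc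
    refine ⟨⟨⇑(g * c), (g * c).bijective, (cond (g * c)).mpr ?_⟩, ?_⟩
    · rw [mul_assoc, hc, ← mul_assoc, hgσ, mul_assoc]
    · apply Subtype.ext
      ext i
      simp
end

section
/- Let n ≥ 3 be an integer. Then Σ_{m : ZMod n} Σ_{k : ZMod n} #{ x : ZMod n → ZMod n bijective | ∀ i : ZMod n, x i = x (i + m) + k } = Σ_{d ∣ n} φ(n/d)² * (n/d)^d * d!, where φ is Euler's totient function and the right-hand sum ranges over the positive divisors d of n. -/
open Nat

theorem aux_pow (n : ℕ) (m : ZMod n) (j : ℕ) (i : ZMod n) :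
    ((Equiv.addRight m : Equiv.Perm (ZMod n)) ^ j) i = i + j • m := by
  induction j with
  | zero => simp
  | succ j ih =>
    rw [_root_.pow_succ', Equiv.Perm.mul_apply, ih, Equiv.coe_addRight, succ_nsmul, ← add_assoc]

theorem aux_cycleType_s11 (n : ℕ) [NeZero n] (m : ZMod n) (hm : m ≠ 0) :
    (Equiv.addRight m : Equiv.Perm (ZMod n)).cycleType =
      Multiset.replicate (n / addOrderOf m) (addOrderOf m) := by
  set σ : Equiv.Perm (ZMod n) := Equiv.addRight m with hσ
  have hpow := aux_pow n m
  have hall : ∀ b ∈ σ.cycleType, b = addOrderOf m := by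
    intro b hb
    rw [Equiv.Perm.cycleType_def, Multiset.mem_map] at hb
    obtain ⟨c, hc, rfl⟩ := hb
    have hc' : c ∈ σ.cycleFactorsFinset := hc
    have hcyc := (Equiv.Perm.mem_cycleFactorsFinset_iff.1 hc').1
    obtain ⟨a, ha⟩ := hcyc.nonempty_support
    have hca := Equiv.Perm.cycle_is_cycleOf ha hc'
    have h2 : ∀ j : ℕ, c ^ j = 1 ↔ j • m = 0 := by
      intro j
      rw [hcyc.pow_eq_one_iff' (Equiv.Perm.mem_support.1 ha), hca,
        Equiv.Perm.cycleOf_pow_apply_self, hpow]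
      simp
    simp only [Function.comp]
    rw [← hcyc.orderOf]
    apply Nat.dvd_antisymm
    · rw [orderOf_dvd_iff_pow_eq_one, h2]; exact addOrderOf_nsmul_eq_zero m
    · rw [addOrderOf_dvd_iff_nsmul_eq_zero, ← h2]; exact pow_orderOf_eq_one c
  have hrep := Multiset.eq_replicate_card.2 hall
  have hsupp : σ.support = Finset.univ := by
    ext i
    simp [hσ, hm]
  have hsum := σ.sum_cycleType
  rw [hsupp, Finset.card_univ, ZMod.card, hrep, Multiset.sum_replicate, smul_eq_mul] at hsum
  have : n / addOrderOf m = Multiset.card σ.cycleType :=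
    Nat.div_eq_of_eq_mul_left (addOrderOf_pos m) hsum.symm
  rw [this]; exact hrep

theorem aux_centralizer_s11 (n : ℕ) [NeZero n] (m : ZMod n) :
    Nat.card (Subgroup.centralizer {(Equiv.addRight m : Equiv.Perm (ZMod n))}) =
      (addOrderOf m) ^ (n / addOrderOf m) * (n / addOrderOf m)! := by
  rw [Equiv.Perm.nat_card_centralizer]
  by_cases hm : m = 0
  · subst hm
    have : (Equiv.addRight (0 : ZMod n)) = (1 : Equiv.Perm (ZMod n)) := by ext; simp
    rw [this]; simp
  · rw [aux_cycleType_s11 n m hm]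
    have hd : n / addOrderOf m * addOrderOf m = n := Nat.div_mul_cancel (by
      simpa using addOrderOf_dvd_card (x := m))
    have h0 : n / addOrderOf m ≠ 0 := by
      intro h; rw [h] at hd; exact NeZero.ne n (by omega)
    simp [hd, Multiset.toFinset_replicate, h0]

theorem aux_card (n : ℕ) [NeZero n] (m k : ZMod n) :
    Nat.card {x : ZMod n → ZMod n // Function.Bijective x ∧ ∀ i : ZMod n, x i = x (i + m) + k} =
      if addOrderOf k = addOrderOf m then
        (addOrderOf m) ^ (n / addOrderOf m) * (n / addOrderOf m)! else 0 := by
  have heq : ∀ x : ZMod n → ZMod n, (∀ i : ZMod n, x i = x (i + m) + k) ↔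
      ∀ i, x (i + m) = x i + -k := by
    intro x
    refine forall_congr' fun i => ?_
    constructor
    · intro h; rw [h]; abel
    · intro h; rw [h]; abel
  have hc : Nat.card {x : ZMod n → ZMod n //
        Function.Bijective x ∧ ∀ i : ZMod n, x i = x (i + m) + k} =
      Nat.card {x : Equiv.Perm (ZMod n) // x * Equiv.addRight m = Equiv.addRight (-k) * x} := by
    refine Nat.card_congr ⟨fun x => ⟨Equiv.ofBijective x.1 x.2.1, ?_⟩,
      fun x => ⟨x.1, x.1.bijective, ?_⟩, fun x => ?_, fun x => ?_⟩
    · ext i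
      simpa using (heq x.1).1 x.2.2 i
    · rw [heq]
      intro i
      simpa using DFunLike.congr_fun x.2 i
    · rfl
    · ext i; rfl
  rw [hc]
  split_ifs with h
  · have hconj : IsConj (Equiv.addRight m : Equiv.Perm (ZMod n)) (Equiv.addRight (-k)) := by
      by_cases hm : m = 0
      · subst hm
        rw [addOrderOf_zero, AddMonoid.addOrderOf_eq_one_iff] at h
        subst h
        simp
      · have hk : -k ≠ 0 := by
          intro h'
          rw [neg_eq_zero] at h'
          subst h'
          rw [addOrderOf_zero, eq_comm, AddMonoid.addOrderOf_eq_one_iff] at h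
          exact hm h
        rw [Equiv.Perm.isConj_iff_cycleType_eq, aux_cycleType_s11 n m hm, aux_cycleType_s11 n _ hk,
          addOrderOf_neg, h]
    obtain ⟨y, hy⟩ := isConj_iff.1 hconj
    rw [← aux_centralizer_s11, ← hy]
    refine Nat.card_congr (Equiv.subtypeEquiv (Equiv.mulLeft y⁻¹) ?_)
    intro x
    rw [Subgroup.mem_centralizer_singleton_iff]
    simp only [Equiv.coe_mulLeft]
    constructor
    · intro h
      rw [mul_assoc, h]; group
    · intro h
      have := congrArg (y * ·) h
      simp only [← mul_assoc, mul_inv_cancel, one_mul] at this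
      simpa only [← mul_assoc] using this
  · rw [Nat.card_eq_zero]
    left
    refine ⟨fun ⟨x, hx⟩ => h ?_⟩
    have hconj : IsConj (Equiv.addRight m : Equiv.Perm (ZMod n)) (Equiv.addRight (-k)) :=
      isConj_iff.2 ⟨x, by rw [hx]; group⟩
    rw [Equiv.Perm.isConj_iff_cycleType_eq] at hconj
    have key : ∀ a : ZMod n, addOrderOf a =
        (Equiv.addRight a : Equiv.Perm (ZMod n)).cycleType.lcm := by
      intro a
      rw [Equiv.Perm.lcm_cycleType]
      have h2 : ∀ j : ℕ, (Equiv.addRight a : Equiv.Perm (ZMod n)) ^ j = 1 ↔ j • a = 0 := by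
        intro j
        rw [Equiv.ext_iff]
        simp only [aux_pow, Equiv.Perm.one_apply, add_eq_left, forall_const]
      refine Nat.dvd_antisymm ?_ ?_
      · rw [addOrderOf_dvd_iff_nsmul_eq_zero, ← h2]; exact pow_orderOf_eq_one _
      · rw [orderOf_dvd_iff_pow_eq_one, h2]; exact addOrderOf_nsmul_eq_zero a
    rw [← addOrderOf_neg k, key, key m, hconj]

/-- The total number of strings fixed by the elements `(c^m, r^k)` (cyclically
shift by `m` and add `k` to every label) is `Σ_{d ∣ n} φ(n/d)² (n/d)^d d!`. -/
theorem total_fixed_strings_cm_rk (n : ℕ) (hn : 3 ≤ n) [NeZero n] :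
    ∑ m : ZMod n, ∑ k : ZMod n,
        Nat.card {x : ZMod n → ZMod n // Function.Bijective x ∧
          ∀ i : ZMod n, x i = x (i + m) + k} =
      ∑ d ∈ n.divisors, (Nat.totient (n / d)) ^ 2 * (n / d) ^ d * d ! := by
  have hdvd : ∀ m : ZMod n, addOrderOf m ∣ n := fun m => by
    simpa using addOrderOf_dvd_card (x := m)
  have hcard : ∀ d, d ∣ n → (Finset.univ.filter fun k : ZMod n => addOrderOf k = d).card = φ d := by
    intro d hd
    exact IsAddCyclic.card_addOrderOf_eq_totient (by simpa using hd)
  simp_rw [aux_card]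
  rw [← Nat.sum_div_divisors]
  have h1 : ∀ m : ZMod n, (∑ k : ZMod n, if addOrderOf k = addOrderOf m then
        (addOrderOf m) ^ (n / addOrderOf m) * (n / addOrderOf m)! else 0) =
        φ (addOrderOf m) * ((addOrderOf m) ^ (n / addOrderOf m) * (n / addOrderOf m)!) := by
    intro m
    rw [← Finset.sum_filter, Finset.sum_const, hcard _ (hdvd m), smul_eq_mul]
  simp_rw [h1]
  rw [← Finset.sum_fiberwise_of_maps_to (t := n.divisors) (g := fun m : ZMod n => addOrderOf m)
    (fun m _ => Nat.mem_divisors.2 ⟨hdvd m, NeZero.ne n⟩)]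
  refine Finset.sum_congr rfl fun d hd => ?_
  have hd' := Nat.dvd_of_mem_divisors hd
  rw [Nat.div_div_self hd' (NeZero.ne n)]
  rw [Finset.sum_congr rfl (g := fun _ => φ d * (d ^ (n / d) * (n / d)!))]
  · rw [Finset.sum_const, hcard d hd', smul_eq_mul]; ring
  · intro m hm
    rw [(Finset.mem_filter.1 hm).2]
end

section
/- Let n ≥ 3 be an integer, let m, k : ZMod n, and suppose there exists a bijection x : ZMod n → ZMod n satisfying x i = -(x (i + m)) - k for all i : ZMod n. Then n is even, m = n/2, and k is odd (i.e., the integer representative of k in {0, …, n-1} is odd). -/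
/-- If some bijection `x : ZMod n → ZMod n` is fixed by `(c^m, s r^k)`, i.e.
`x i = -(x (i + m)) - k` for all `i`, then `n` is even, `m = n/2`, and the
integer representative of `k` is odd. -/
theorem fixed_string_cm_srk_necessary (n : ℕ) (hn : 3 ≤ n) (m k : ZMod n)
    (hx : ∃ x : ZMod n → ZMod n, Function.Bijective x ∧
      ∀ i : ZMod n, x i = -(x (i + m)) - k) :
    Even n ∧ m = ((n / 2 : ℕ) : ZMod n) ∧ Odd (ZMod.val k) := by
  obtain ⟨x, ⟨hinj, hsurj⟩, h⟩ := hx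
  haveI : NeZero n := ⟨by omega⟩
  have h2m : m + m = 0 := by
    have h1 := h 0
    have h2 := h (0 + m)
    have h3 : x (0 + m + m) = x 0 := by
      rw [h1, h2]; ring
    have h4 := hinj h3
    simpa using h4
  have hm : m ≠ 0 := by
    rintro rfl
    obtain ⟨a, ha⟩ := hsurj 0
    obtain ⟨b, hb⟩ := hsurj 1
    have h1 := h a
    have h2 := h b
    rw [add_zero, ha] at h1
    rw [add_zero, hb] at h2
    have h3 : ((2 : ℕ) : ZMod n) = 0 := by
      push_cast
      linear_combination h2 - h1
    rw [ZMod.natCast_eq_zero_iff] at h3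
    have := Nat.le_of_dvd (by norm_num) h3
    omega
  have hv : m.val + m.val = n := by
    have h3 : ((m.val + m.val : ℕ) : ZMod n) = 0 := by
      push_cast
      rw [ZMod.natCast_zmod_val, h2m]
    rw [ZMod.natCast_eq_zero_iff] at h3
    have hlt := ZMod.val_lt m
    have hpos : m.val ≠ 0 := by
      rwa [Ne, ZMod.val_eq_zero]
    obtain ⟨c, hc⟩ := h3
    have hc0 : c ≠ 0 := by rintro rfl; omega
    have hc2 : c < 2 := by
      by_contra hcc
      have : n * 2 ≤ n * c := Nat.mul_le_mul_left n (by omega)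
      omega
    have hc1 : c = 1 := by omega
    rw [hc1] at hc
    omega
  refine ⟨⟨m.val, hv.symm⟩, ?_, ?_⟩
  · have : n / 2 = m.val := by omega
    rw [this, ZMod.natCast_zmod_val]
  · by_contra hk
    rw [Nat.not_odd_iff_even] at hk
    obtain ⟨j, hj⟩ := hk
    have hkj : k = (j : ZMod n) + j := by
      rw [← ZMod.natCast_zmod_val k, hj]
      push_cast
      rfl
    obtain ⟨a, ha⟩ := hsurj (-(j : ZMod n))
    have h1 := h a
    have h2 : x (a + m) = x a := by
      rw [hkj] at h1
      linear_combination h1 - 2 * ha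
    have h3 := hinj h2
    exact hm (by simpa using h3)
end

section
/- Let n ≥ 3 be an integer. Then Σ_{m : ZMod n} Σ_{k : ZMod n} #{ x : ZMod n → ZMod n bijective | ∀ i : ZMod n, x i = -(x (i + m)) - k } equals (n/2) * n!! if n is even and 0 if n is odd. -/
open Nat

open Equiv Equiv.Perm in
lemma fpf_cycleType {α : Type*} [Fintype α] [DecidableEq α] (h : ℕ)
    (hc : Fintype.card α = 2 * h) (a : Equiv.Perm α) (ha : a ^ 2 = 1) (hf : ∀ i, a i ≠ i) :
    a.cycleType = Multiset.replicate h 2 := by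
  have h1 := pow_prime_eq_one_iff.mp ha
  have h2 := Multiset.eq_replicate_card.mpr h1
  have h3 : a.support = Finset.univ := by
    ext i; simp [hf i]
  have h4 := a.sum_cycleType
  rw [h3, Finset.card_univ, hc, h2] at h4
  simp only [Multiset.sum_replicate, smul_eq_mul] at h4
  have : Multiset.card a.cycleType = h := by omega
  rw [this] at h2
  exact h2

open Equiv Equiv.Perm in
lemma card_conj {α : Type*} [Fintype α] [DecidableEq α] (h : ℕ) (h0 : 0 < h)
    (hc : Fintype.card α = 2 * h) (a b : Equiv.Perm α) (ha : a ^ 2 = 1) (hf : ∀ i, a i ≠ i)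
    (hb : b ^ 2 = 1) (hg : ∀ i, b i ≠ i) :
    Nat.card {x : α → α // Function.Bijective x ∧ ∀ i, x (a i) = b (x i)} =
      Nat.doubleFactorial (2 * h) := by
  have ta := fpf_cycleType h hc a ha hf
  have tb := fpf_cycleType h hc b hb hg
  obtain ⟨c, hc'⟩ := isConj_iff.mp (isConj_of_cycleType_eq (ta.trans tb.symm))
  have hcc : ∀ i, b (c i) = c (a i) := by
    intro i; rw [← hc']; simp
  have e : Nat.card (Subgroup.centralizer {a}) =
      Nat.card {x : α → α // Function.Bijective x ∧ ∀ i, x (a i) = b (x i)} := by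
    refine Nat.card_congr (Equiv.ofBijective (fun y => ⟨fun i => c (y.1 i), ?_, ?_⟩) ⟨?_, ?_⟩)
    · exact c.bijective.comp y.1.bijective
    · intro i
      have := Subgroup.mem_centralizer_singleton_iff.mp y.2
      have := congrArg (fun p : Equiv.Perm α => p i) this
      simp only [Perm.mul_apply] at this
      show c (y.1 (a i)) = b (c (y.1 i))
      rw [hcc, this]
    · rintro y z hyz
      ext i
      have := congrFun (congrArg Subtype.val hyz) i
      exact c.injective this
    · rintro ⟨x, hx, hx2⟩
      refine ⟨⟨c⁻¹ * Equiv.ofBijective x hx, ?_⟩, ?_⟩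
      · rw [Subgroup.mem_centralizer_singleton_iff]
        ext i
        apply c.injective
        simp [← hcc, hx2]
      · ext i
        simp
  rw [← e, nat_card_centralizer, ta, hc, Nat.doubleFactorial_two_mul]
  simp [Multiset.toFinset_replicate, h0.ne', mul_comm]

lemma zmod_even_iff (n : ℕ) [NeZero n] (hn : Even n) (k : ZMod n) : Even k ↔ Even k.val := by
  constructor
  · rintro ⟨y, rfl⟩
    rw [ZMod.val_add, Nat.even_iff, Nat.mod_mod_of_dvd _ hn.two_dvd]
    omega
  · rintro ⟨y, hy⟩
    refine ⟨(y : ZMod n), ?_⟩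
    rw [← ZMod.natCast_zmod_val k, hy]; push_cast; rfl

open Classical in
lemma card_zmod_odd (h : ℕ) [NeZero (2 * h)] :
    (Finset.univ.filter (fun k : ZMod (2 * h) => ¬ Even k)).card = h := by
  have hn : Even (2 * h) := even_two_mul h
  have key : ∀ k : ZMod (2 * h), Even (k + 1) ↔ ¬ Even k := by
    intro k
    rw [zmod_even_iff _ hn, zmod_even_iff _ hn, ZMod.val_add, Nat.even_iff,
      Nat.mod_mod_of_dvd _ hn.two_dvd, ZMod.val_one_eq_one_mod, Nat.even_iff]
    have : 1 < 2 * h := by have := NeZero.ne (2 * h); omega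
    rw [Nat.mod_eq_of_lt this]
    omega
  have h1 : (Finset.univ.filter (fun k : ZMod (2 * h) => ¬ Even k)).card =
      (Finset.univ.filter (fun k : ZMod (2 * h) => Even k)).card := by
    refine Finset.card_equiv (Equiv.addRight 1) ?_
    intro k
    simp [key]
  have h2 := Finset.card_filter_add_card_filter_not (s := Finset.univ)
    (fun k : ZMod (2 * h) => Even k)
  rw [Finset.card_univ, ZMod.card] at h2
  omega

lemma card_even_zero (n : ℕ) (hn : 3 ≤ n) (m k : ZMod n) (hk : Even k) :
    Nat.card {x : ZMod n → ZMod n // Function.Bijective x ∧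
          ∀ i : ZMod n, x i = -(x (i + m)) - k} = 0 := by
  have : IsEmpty {x : ZMod n → ZMod n // Function.Bijective x ∧
          ∀ i : ZMod n, x i = -(x (i + m)) - k} := by
    constructor
    rintro ⟨x, hx, h⟩
    obtain ⟨y, rfl⟩ := hk
    obtain ⟨i, hi⟩ := hx.2 (-y)
    have h1 := h i
    have h2 : x (i + m) = x i := by
      linear_combination h1 - 2 * hi
    have h3 : m = 0 := by simpa using hx.1 h2
    subst h3
    obtain ⟨p, hp⟩ := hx.2 0
    obtain ⟨q, hq⟩ := hx.2 1
    have hp' := h p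
    have hq' := h q
    simp only [add_zero, hp, hq] at hp' hq'
    have : ((2 : ℕ) : ZMod n) = 0 := by
      push_cast
      linear_combination hq' - hp'
    rw [ZMod.natCast_eq_zero_iff] at this
    exact absurd (Nat.le_of_dvd (by norm_num) this) (by omega)
  exact Nat.card_of_isEmpty

lemma card_odd_s13 (h : ℕ) [NeZero (2 * h)] (k : ZMod (2 * h)) (hk : ¬ Even k) :
    ∑ m : ZMod (2 * h), Nat.card {x : ZMod (2 * h) → ZMod (2 * h) // Function.Bijective x ∧
          ∀ i, x i = -(x (i + m)) - k} = Nat.doubleFactorial (2 * h) := by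
  have h0 : 0 < h := by have := NeZero.ne (2 * h); omega
  have hh : ((h : ℕ) : ZMod (2 * h)) + h = 0 := by
    have := ZMod.natCast_self (2 * h)
    push_cast at this
    linear_combination this
  have hne : ((h : ℕ) : ZMod (2 * h)) ≠ 0 := by
    rw [Ne, ZMod.natCast_eq_zero_iff]
    intro hd
    have := Nat.le_of_dvd h0 hd
    omega
  rw [Finset.sum_eq_single ((h : ℕ) : ZMod (2 * h))]
  · rw [← card_conj h h0 (ZMod.card (2 * h)) (Equiv.addRight (h : ZMod (2 * h)))
      (Equiv.subLeft (-k)) ?_ ?_ ?_ ?_]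
    · refine Nat.card_congr (Equiv.subtypeEquivRight fun x => ?_)
      refine and_congr_right fun _ => forall_congr' fun i => ?_
      simp only [Equiv.coe_addRight, Equiv.subLeft_apply]
      constructor <;> intro H <;> linear_combination H
    · ext i : 1
      simp [pow_two, add_assoc, hh]
    · intro i; simpa using hne
    · ext i : 1
      simp [pow_two]
    · intro i hi
      apply hk
      refine ⟨-i, ?_⟩
      simp only [Equiv.subLeft_apply] at hi
      linear_combination -hi
  · intro m _ hm
    have : IsEmpty {x : ZMod (2 * h) → ZMod (2 * h) // Function.Bijective x ∧
          ∀ i, x i = -(x (i + m)) - k} := by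
      constructor
      rintro ⟨x, hx, H⟩
      have e1 := H 0
      have e2 := H (0 + m)
      have e3 : x (0 + m + m) = x 0 := by linear_combination -e1 + e2
      have e4 : m + m = 0 := by simpa using hx.1 e3
      have e5 : m ≠ 0 := by
        rintro rfl
        apply hk
        refine ⟨-x 0, ?_⟩
        rw [add_zero] at e1
        linear_combination e1
      apply hm
      have e6 : ((m.val + m.val : ℕ) : ZMod (2 * h)) = 0 := by
        push_cast; rw [ZMod.natCast_zmod_val]; exact e4
      rw [ZMod.natCast_eq_zero_iff] at e6
      have e7 := m.val_lt
      have e8 : m.val ≠ 0 := by rwa [Ne, ZMod.val_eq_zero]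
      obtain ⟨t, ht⟩ := e6
      have e9 : m.val = h * t := by
        rw [mul_assoc] at ht; omega
      have : t = 1 := by
        rcases t with _ | _ | t
        · simp at e9; omega
        · rfl
        · exfalso; nlinarith
      rw [this, mul_one] at e9
      rw [← ZMod.natCast_zmod_val m, e9]
    exact Nat.card_of_isEmpty
  · simp

/-- The total number of strings fixed by the elements `(c^m, s r^k)` (cyclically
shift by `m` and replace every label `x` by `-x - k`) is `(n/2)·n!!` if `n` is
even and `0` if `n` is odd. -/
theorem total_fixed_strings_cm_srk (n : ℕ) (hn : 3 ≤ n) [NeZero n] :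
    ∑ m : ZMod n, ∑ k : ZMod n,
        Nat.card {x : ZMod n → ZMod n // Function.Bijective x ∧
          ∀ i : ZMod n, x i = -(x (i + m)) - k} =
      if Even n then (n / 2) * Nat.doubleFactorial n else 0 := by
  classical
  split_ifs with he
  · obtain ⟨h, rfl⟩ := he.two_dvd
    rw [Finset.sum_comm, ← Finset.sum_filter_add_sum_filter_not Finset.univ
      (fun k : ZMod (2 * h) => Even k)]
    rw [Finset.sum_eq_zero, zero_add, Finset.sum_congr rfl
      (fun k hk => card_odd_s13 h k (Finset.mem_filter.mp hk).2), Finset.sum_const, card_zmod_odd]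
    · simp
    · intro k hk
      exact Finset.sum_eq_zero fun m _ => card_even_zero _ hn m k (Finset.mem_filter.mp hk).2
  · obtain ⟨t, ht⟩ := Nat.not_even_iff_odd.mp he
    refine Finset.sum_eq_zero fun m _ => Finset.sum_eq_zero fun k _ => card_even_zero _ hn m k ?_
    refine ⟨(t + 1) * k, ?_⟩
    have : ((2 * t + 1 : ℕ) : ZMod n) = 0 := by rw [← ht]; exact ZMod.natCast_self n
    push_cast at this
    linear_combination (-k) * this
end

section
/- Let n ≥ 3 be an integer. Then Σ_{m : ZMod n} Σ_{k : ZMod n} #{ x : ZMod n → ZMod n bijective | ∀ i : ZMod n, x i = -(x (m - (i + 1))) - k } equals (n/2 + 1) * (n/2) * n!! if n is even and n² * (n-1)!! if n is odd. -/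
open Nat

lemma aux_cycleType_s15 {α : Type*} [Fintype α] [DecidableEq α] (ρ : Equiv.Perm α)
    (h : ∀ i, ρ (ρ i) = i) (r : ℕ) (hr : ρ.support.card = 2 * r) :
    ρ.cycleType = Multiset.replicate r 2 := by
  haveI : Fact (Nat.Prime 2) := ⟨Nat.prime_two⟩
  have h2 : ρ ^ 2 = 1 := by
    ext i; simp [pow_two, h]
  have h3 := (Equiv.Perm.pow_prime_eq_one_iff (p := 2)).1 h2
  have h4 := Multiset.eq_replicate_card.2 h3
  have h5 := Equiv.Perm.sum_cycleType ρ
  rw [h4, Multiset.sum_replicate, hr, smul_eq_mul] at h5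
  rw [h4]
  congr 1
  omega

lemma aux_count_s15 {α : Type*} [Fintype α] [DecidableEq α] (ρ σ : Equiv.Perm α)
    (hρ : ∀ i, ρ (ρ i) = i) (hσ : ∀ i, σ (σ i) = i) (r : ℕ)
    (h1 : ρ.support.card = 2 * r) (h2 : σ.support.card = 2 * r) :
    Nat.card {x : α → α // Function.Bijective x ∧ ∀ i, x i = σ (x (ρ i))} =
      (Fintype.card α - 2 * r)! * (2 ^ r * r !) := by
  have c1 := aux_cycleType_s15 ρ hρ r h1
  have c2 := aux_cycleType_s15 σ hσ r h2
  obtain ⟨g, hg⟩ := isConj_iff.1 (Equiv.Perm.isConj_iff_cycleType_eq.2 (c1.trans c2.symm))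
  have hg' : ∀ i, σ (g i) = g (ρ i) := by
    intro i; rw [← hg]; simp
  have key : Nat.card {x : α → α // Function.Bijective x ∧ ∀ i, x i = σ (x (ρ i))} =
      Nat.card (Subgroup.centralizer {ρ}) := by
    symm
    refine Nat.card_eq_of_bijective
      (fun c => ⟨fun i => g (c.1 i), g.bijective.comp c.1.bijective, ?_⟩) ⟨?_, ?_⟩
    · intro i
      have hc := Subgroup.mem_centralizer_singleton_iff.1 c.2
      have := DFunLike.congr_fun hc i
      simp only [Equiv.Perm.mul_apply] at this
      rw [hg']
      rw [this, hρ]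
    · intro c d hcd
      apply Subtype.ext
      ext i
      have := congrFun (congrArg Subtype.val hcd) i
      exact g.injective this
    · rintro ⟨x, hx, hxx⟩
      refine ⟨⟨(Equiv.ofBijective x hx).trans g.symm, ?_⟩, ?_⟩
      · rw [Subgroup.mem_centralizer_singleton_iff]
        ext i
        simp only [Equiv.Perm.mul_apply, Equiv.trans_apply, Equiv.ofBijective_apply]
        rw [Equiv.symm_apply_eq, ← hg', Equiv.apply_symm_apply, hxx (ρ i), hρ]
      · apply Subtype.ext
        funext i
        simp
  rw [key, Equiv.Perm.nat_card_centralizer, c1]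
  rcases Nat.eq_zero_or_pos r with rfl | hr
  · simp
  · rw [Multiset.toFinset_replicate, if_neg hr.ne']
    simp [Nat.mul_comm, Nat.mul_assoc, mul_left_comm]

lemma aux_zero {α : Type*} [Fintype α] [DecidableEq α] (ρ σ : Equiv.Perm α)
    (hσ : ∀ i, σ (σ i) = i)
    (h : ρ.support.card ≠ σ.support.card) :
    Nat.card {x : α → α // Function.Bijective x ∧ ∀ i, x i = σ (x (ρ i))} = 0 := by
  rw [Nat.card_eq_zero]
  left
  refine ⟨fun ⟨x, hx, hxx⟩ => h ?_⟩
  apply Finset.card_bij (fun i _ => x i)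
  · intro i hi
    rw [Equiv.Perm.mem_support] at hi ⊢
    intro hs
    apply hi
    apply hx.1
    have h3 := congrArg σ (hxx i)
    rw [hσ, hs] at h3
    exact h3.symm
  · intro a _ b _ hab
    exact hx.1 hab
  · intro b hb
    obtain ⟨a, rfl⟩ := hx.2 b
    refine ⟨a, ?_, rfl⟩
    rw [Equiv.Perm.mem_support] at hb ⊢
    intro ha
    apply hb
    have := hxx a
    rw [ha] at this
    exact this.symm

/-- number of fixed points of `y ↦ c - y` -/
def auxFix (n : ℕ) [NeZero n] (c : ZMod n) : ℕ :=
  (Finset.univ.filter fun y : ZMod n => y + y = c).card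

lemma aux_support (n : ℕ) [NeZero n] (c : ZMod n) :
    (Equiv.Perm.support (Equiv.subLeft c : Equiv.Perm (ZMod n))).card + auxFix n c = n := by
  have := Finset.card_filter_add_card_filter_not (s := (Finset.univ : Finset (ZMod n)))
    (fun y => y + y = c)
  rw [Finset.card_univ, ZMod.card] at this
  rw [auxFix, add_comm]
  have hs : Equiv.Perm.support (Equiv.subLeft c : Equiv.Perm (ZMod n)) =
      Finset.univ.filter (fun y : ZMod n => ¬ (y + y = c)) := by
    ext y
    simp only [Equiv.Perm.mem_support, Equiv.subLeft_apply, Finset.mem_filter,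
      Finset.mem_univ, true_and, Ne, sub_eq_iff_eq_add]
    rw [eq_comm]
  rw [hs]
  exact this

lemma aux_sum (n : ℕ) [NeZero n] : ∑ c : ZMod n, auxFix n c = n := by
  have := Finset.card_eq_sum_card_fiberwise (s := (Finset.univ : Finset (ZMod n)))
    (t := Finset.univ) (f := fun y => y + y) (by simp)
  rw [Finset.card_univ, ZMod.card] at this
  exact this.symm

lemma aux_odd (n : ℕ) [NeZero n] (h : Odd n) (c : ZMod n) : auxFix n c = 1 := by
  obtain ⟨r, hr⟩ := h
  have h0 : (2 * r + 1 : ZMod n) = 0 := by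
    have : ((2 * r + 1 : ℕ) : ZMod n) = 0 :=
      (ZMod.natCast_eq_zero_iff _ _).2 (Dvd.intro 1 (by omega))
    push_cast at this
    exact this
  rw [auxFix, Finset.card_eq_one]
  refine ⟨-(r * c), ?_⟩
  ext y
  simp only [Finset.mem_filter, Finset.mem_univ, true_and, Finset.mem_singleton]
  constructor
  · rintro rfl
    linear_combination y * h0
  · rintro rfl
    linear_combination -c * h0

lemma aux_even (n h : ℕ) [NeZero n] (hn : n = 2 * h) (c : ZMod n) :
    auxFix n c = 0 ∨ auxFix n c = 2 := by
  have hpos : 0 < n := Nat.pos_of_ne_zero (NeZero.ne n)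
  have h0 : (h + h : ZMod n) = 0 := by
    have : ((2 * h : ℕ) : ZMod n) = 0 :=
      (ZMod.natCast_eq_zero_iff _ _).2 (Dvd.intro 1 (by omega))
    push_cast at this
    rw [← this]; ring
  have hne : (h : ZMod n) ≠ 0 := by
    rw [Ne, ZMod.natCast_eq_zero_iff]
    intro hd
    have := Nat.le_of_dvd (by omega) hd
    omega
  have hz : ∀ z : ZMod n, z + z = 0 → z = 0 ∨ z = h := by
    intro z hz
    have hv : ((z.val + z.val : ℕ) : ZMod n) = 0 := by
      push_cast; rw [ZMod.natCast_zmod_val]; exact hz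
    rw [ZMod.natCast_eq_zero_iff] at hv
    have hlt := ZMod.val_lt z
    obtain ⟨q, hq⟩ := hv
    have hq2 : q < 2 := by
      by_contra hc
      have : n * 2 ≤ n * q := Nat.mul_le_mul_left n (by omega)
      omega
    rw [← ZMod.natCast_zmod_val z]
    interval_cases q
    · left
      have : z.val = 0 := by omega
      rw [this]; simp
    · right
      congr 1; omega
  by_cases hex : ∃ y : ZMod n, y + y = c
  · right
    obtain ⟨y, rfl⟩ := hex
    rw [auxFix, Finset.card_eq_two]
    refine ⟨y, y + h, by simpa using hne, ?_⟩
    ext w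
    simp only [Finset.mem_filter, Finset.mem_univ, true_and, Finset.mem_singleton,
      Finset.mem_insert]
    constructor
    · intro hw
      rcases hz (w - y) (by linear_combination hw) with h1 | h1
      · left; linear_combination h1
      · right; linear_combination h1
    · rintro (rfl | rfl)
      · rfl
      · linear_combination h0
  · left
    push Not at hex
    rw [auxFix, Finset.card_eq_zero]
    ext w
    simp [hex w]

/-- The total number of strings fixed by the elements `(c^m v, s r^k)` (reverse,
cyclically shift by `m`, and replace every label `x` by `-x - k`) is
`(n/2 + 1)·(n/2)·n!!` if `n` is even and `n²·(n-1)!!` if `n` is odd. -/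
theorem total_fixed_strings_cmv_srk (n : ℕ) (hn : 3 ≤ n) [NeZero n] :
    ∑ m : ZMod n, ∑ k : ZMod n,
        Nat.card {x : ZMod n → ZMod n // Function.Bijective x ∧
          ∀ i : ZMod n, x i = -(x (m - (i + 1))) - k} =
      if Even n then (n / 2 + 1) * (n / 2) * Nat.doubleFactorial n
      else n ^ 2 * Nat.doubleFactorial (n - 1) := by
  let F : ZMod n → ZMod n → ℕ := fun a b =>
    Nat.card {x : ZMod n → ZMod n // Function.Bijective x ∧
      ∀ i : ZMod n, x i = (Equiv.subLeft b) (x ((Equiv.subLeft a) i))}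
  have hF : ∀ m k : ZMod n, Nat.card {x : ZMod n → ZMod n // Function.Bijective x ∧
          ∀ i : ZMod n, x i = -(x (m - (i + 1))) - k} =
          F (Equiv.subRight 1 m) (Equiv.neg _ k) := by
    intro m k
    have e1 : ∀ i : ZMod n, m - (i + 1) = m - 1 - i := fun i => by ring
    have e2 : ∀ y : ZMod n, -y - k = -k - y := fun i => by ring
    simp only [F, Equiv.subLeft_apply, Equiv.subRight_apply, Equiv.neg_apply, e1, e2]
  have hsum : ∑ m : ZMod n, ∑ k : ZMod n,
        Nat.card {x : ZMod n → ZMod n // Function.Bijective x ∧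
          ∀ i : ZMod n, x i = -(x (m - (i + 1))) - k} = ∑ a, ∑ b, F a b := by
    simp_rw [hF]
    rw [Equiv.sum_comp (Equiv.subRight (1 : ZMod n))
      (fun a => ∑ k, F a (Equiv.neg (ZMod n) k))]
    refine Finset.sum_congr rfl fun a _ => ?_
    exact Equiv.sum_comp (Equiv.neg (ZMod n)) (fun b => F a b)
  rw [hsum]
  have inv : ∀ c i : ZMod n, (Equiv.subLeft c) ((Equiv.subLeft c) i) = i := by
    intro c i; simp
  have hsame : ∀ a b : ZMod n, ∀ r f : ℕ, n = 2 * r + f → auxFix n a = f → auxFix n b = f →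
      F a b = f ! * (2 * r)‼ := by
    intro a b r f hr ha hb
    have sa := aux_support n a
    have sb := aux_support n b
    have := aux_count_s15 (Equiv.subLeft a) (Equiv.subLeft b) (inv a) (inv b) r
      (by omega) (by omega)
    rw [ZMod.card, show n - 2 * r = f by omega] at this
    rw [Nat.doubleFactorial_two_mul]
    exact this
  have hdiff : ∀ a b : ZMod n, auxFix n a ≠ auxFix n b → F a b = 0 := by
    intro a b hab
    have sa := aux_support n a
    have sb := aux_support n b
    exact aux_zero (Equiv.subLeft a) (Equiv.subLeft b) (inv b) (by omega)
  split_ifs with he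
  · obtain ⟨h, hh⟩ := he
    obtain ⟨t, rfl⟩ : ∃ t, h = t + 1 := ⟨h - 1, by omega⟩
    have hfix := aux_even n (t + 1) (by omega)
    have hFab : ∀ a b, F a b = if auxFix n a = 2 then
        (if auxFix n b = 2 then 2 * (2 * t)‼ else 0) else
        (if auxFix n b = 2 then 0 else (2 * (t + 1))‼) := by
      intro a b
      rcases hfix a with ha | ha <;> rcases hfix b with hb | hb
      · rw [hsame a b (t + 1) 0 (by omega) ha hb]; simp [ha, hb]
      · rw [hdiff a b (by omega)]; simp [ha, hb]
      · rw [hdiff a b (by omega)]; simp [ha, hb]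
      · rw [hsame a b t 2 (by omega) ha hb]; simp [ha, hb]
    have hS : (Finset.univ.filter fun c : ZMod n => auxFix n c = 2).card = t + 1 := by
      have h1 := aux_sum n
      have h2 : ∀ c : ZMod n, auxFix n c = if auxFix n c = 2 then 2 else 0 := by
        intro c
        rcases hfix c with hc | hc <;> simp [hc]
      rw [Finset.sum_congr rfl (fun c _ => h2 c), ← Finset.sum_filter, Finset.sum_const,
        smul_eq_mul] at h1
      omega
    have hS' : (Finset.univ.filter fun c : ZMod n => ¬ auxFix n c = 2).card = t + 1 := by
      have := Finset.card_filter_add_card_filter_not (s := (Finset.univ : Finset (ZMod n)))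
        (fun c => auxFix n c = 2)
      rw [Finset.card_univ, ZMod.card] at this
      omega
    have hrow : ∀ a, ∑ b, F a b = if auxFix n a = 2 then (t + 1) * (2 * (2 * t)‼) else
        (t + 1) * (2 * (t + 1))‼ := by
      intro a
      simp_rw [hFab a]
      split_ifs with ha
      · rw [Finset.sum_ite, Finset.sum_const, Finset.sum_const_zero, hS]; simp
      · rw [Finset.sum_ite, Finset.sum_const_zero, Finset.sum_const, hS']; simp
    simp_rw [hrow]
    rw [Finset.sum_ite, Finset.sum_const, Finset.sum_const, hS, hS']
    have hn2 : n = 2 * t + 2 := by omega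
    have hd : n / 2 = t + 1 := by omega
    rw [hd, show (n)‼ = (2 * t + 2)‼ by rw [← hn2], show 2 * (t + 1) = 2 * t + 2 by ring,
      Nat.doubleFactorial_add_two]
    simp only [smul_eq_mul]
    ring
  · rw [Nat.not_even_iff_odd] at he
    have hf := aux_odd n he
    obtain ⟨r, hr⟩ := he
    have : ∀ a b, F a b = (n - 1)‼ := by
      intro a b
      rw [hsame a b r 1 hr (hf a) (hf b), show n - 1 = 2 * r by omega]
      simp
    simp only [this, Finset.sum_const, Finset.card_univ, ZMod.card, smul_eq_mul]
    ring
end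

section
/- Let n ≥ 3 be an odd integer and let m, k : ZMod n. Then there is no bijection x : ZMod n → ZMod n satisfying x i = x (m - (i + 1)) + k for all i : ZMod n. -/
/-- For odd `n ≥ 3`, no string is fixed by any element `(c^m v, r^k)`: there is no
bijection `x : ZMod n → ZMod n` with `x i = x (m - (i + 1)) + k` for all `i`. -/
theorem no_fixed_strings_cmv_rk_odd (n : ℕ) (hn : 3 ≤ n) (hodd : Odd n)
    (m k : ZMod n) :
    ¬ ∃ x : ZMod n → ZMod n, Function.Bijective x ∧
        ∀ i : ZMod n, x i = x (m - (i + 1)) + k := by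
  rintro ⟨x, hx, h⟩
  obtain ⟨t, ht⟩ := hodd
  have hz : (2 * (t : ZMod n) + 1) = 0 := by
    have h0 : ((2 * t + 1 : ℕ) : ZMod n) = 0 := by
      rw [← ht]; exact ZMod.natCast_self n
    exact_mod_cast h0
  -- the reflection has a fixed point, so `k = 0`
  have hfix : m - ((m - 1) * ((t : ZMod n) + 1) + 1) = (m - 1) * ((t : ZMod n) + 1) := by
    linear_combination (-(m - 1)) * hz
  have hk : k = 0 := by
    have h1 := h ((m - 1) * ((t : ZMod n) + 1))
    rw [hfix] at h1
    simpa using h1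
  have hi : ∀ i : ZMod n, i = m - (i + 1) := fun i => hx.1 (by simpa [hk] using h i)
  have h2 : ((2 : ℕ) : ZMod n) = 0 := by
    push_cast
    linear_combination hi 1 - hi 0
  have hd := (ZMod.natCast_eq_zero_iff 2 n).1 h2
  have := Nat.le_of_dvd (by norm_num) hd
  omega
end
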